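/- Let 𝛑 be a policy ensemble, Lipschitz continuous in α up to finitely many discontinuities, with 𝛍 = Ψ(𝛑). Under Assumptions (W) and (Lip), consider the N-agent policy (π¹,…,π^{i−1},π̂,π^{i+1},…,π^N) where (π¹,…,π^N) = Γ_N(𝛑) and π̂ ∈ Π is arbitrary. Then for any family 𝓗 of functions h : 𝒳 × ℬ₁(𝒳) → ℝ which is uniformly bounded and uniformly Lipschitz, and any ε, p > 0 and t ∈ 𝒯, there exists N' such that for all N > N': sup_{h∈𝓗} |E[h(X^i_t, 𝔾^i_t)] − E[h(X̂^{i/N}_t, 𝔾^{i/N}_t)]| < ε, uniformly over all deviations π̂ ∈ Π and all i in some set 𝒲_N ⊆ 𝒱_N with |𝒲_N| ≥ ⌊(1−p)N⌋, where 𝔾^i_t = (1/N)Σ_j ξ^N_{i,j} δ_{X^j_t} is the empirical neighborhood mean field and 𝔾^{i/N}_t = ∫₀¹ W(i/N,β) μ^β_t dβ the limiting one. -/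

import Mathlib

open MeasureTheory Filter
open scoped BigOperators

namespace GMFG

variable {𝒳 𝒰 : Type*}

/-- The probability simplex 𝒫(𝒳) on a finite set, as probability mass functions. -/
def simplex (𝒳 : Type*) [Fintype 𝒳] : Set (𝒳 → ℝ) :=
  {p | (∀ x, 0 ≤ p x) ∧ ∑ x, p x = 1}

/-- The set ℬ₁(𝒳) of (sub-probability) measures with total mass at most 1,
as mass functions. -/
def subProb (𝒳 : Type*) [Fintype 𝒳] : Set (𝒳 → ℝ) :=
  {p | (∀ x, 0 ≤ p x) ∧ ∑ x, p x ≤ 1}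

/-- L¹ distance between measures on a finite set. -/
noncomputable def l1dist [Fintype 𝒳] (ν ν' : 𝒳 → ℝ) : ℝ := ∑ x, |ν x - ν' x|

/-- Markovian feedback policies π ∈ Π = 𝒫(𝒰)^{𝒯×𝒳}. -/
def IsPolicy [Fintype 𝒰] (π : ℕ → 𝒳 → 𝒰 → ℝ) : Prop :=
  ∀ t x, (∀ u, 0 ≤ π t x u) ∧ ∑ u, π t x u = 1

/-- P : 𝒳×𝒰×ℬ₁(𝒳) → 𝒫(𝒳) is a transition kernel. -/
def IsKernel [Fintype 𝒳] [Fintype 𝒰] (P : 𝒳 → 𝒰 → (𝒳 → ℝ) → 𝒳 → ℝ) : Prop :=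
  ∀ x u ν, ν ∈ subProb 𝒳 → P x u ν ∈ simplex 𝒳

/-- Lipschitz continuity of the transition kernel w.r.t. the L¹ norm. -/
def KernelLipschitz [Fintype 𝒳] [Fintype 𝒰] (P : 𝒳 → 𝒰 → (𝒳 → ℝ) → 𝒳 → ℝ) (L : ℝ) : Prop :=
  ∀ x u ν ν', ν ∈ subProb 𝒳 → ν' ∈ subProb 𝒳 → l1dist (P x u ν) (P x u ν') ≤ L * l1dist ν ν'

/-- Lipschitz continuity of the reward w.r.t. the L¹ norm. -/
def RewardLipschitz [Fintype 𝒳] [Fintype 𝒰] (r : 𝒳 → 𝒰 → (𝒳 → ℝ) → ℝ) (L : ℝ) : Prop :=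
  ∀ x u ν ν', ν ∈ subProb 𝒳 → ν' ∈ subProb 𝒳 → |r x u ν - r x u ν'| ≤ L * l1dist ν ν'

/-- A graphon: symmetric, measurable, [0,1]-valued. -/
def IsGraphon (W : ℝ → ℝ → ℝ) : Prop :=
  Measurable (Function.uncurry W) ∧ (∀ a b, W a b = W b a) ∧ ∀ a b, W a b ∈ Set.Icc (0:ℝ) 1

/-- Lipschitz continuity of a graphon on [0,1]². -/
def GraphonLipschitz (W : ℝ → ℝ → ℝ) (L : ℝ) : Prop :=
  ∀ a b a' b' : ℝ, a ∈ Set.Icc (0:ℝ) 1 → b ∈ Set.Icc (0:ℝ) 1 → a' ∈ Set.Icc (0:ℝ) 1 →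
    b' ∈ Set.Icc (0:ℝ) 1 → |W a b - W a' b'| ≤ L * (|a - a'| + |b - b'|)

/-- The neighborhood mean field 𝔾^α = ∫₀¹ W(α,β) ν^β dβ of a state marginal ensemble ν. -/
noncomputable def nbhd [Fintype 𝒳] (W : ℝ → ℝ → ℝ) (ν : ℝ → 𝒳 → ℝ) (α : ℝ) : 𝒳 → ℝ :=
  fun x => ∫ β in Set.Ioc (0:ℝ) 1, W α β * ν β x

/-- 𝛍 = Ψ(𝛑): the (measurable) mean field ensemble generated by the policy ensemble 𝛑,
via μ^α_0 = μ₀ and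
μ^α_{t+1}(x') = Σ_{x,u} μ^α_t(x) π^α_t(u|x) P(x'|x,u,𝔾^α_t). -/
def IsMeanFieldOf [Fintype 𝒳] [Fintype 𝒰] (W : ℝ → ℝ → ℝ) (P : 𝒳 → 𝒰 → (𝒳 → ℝ) → 𝒳 → ℝ)
    (μ0 : 𝒳 → ℝ) (πe : ℝ → ℕ → 𝒳 → 𝒰 → ℝ) (μ : ℕ → ℝ → 𝒳 → ℝ) : Prop :=
  (∀ t x, Measurable fun α => μ t α x) ∧
  (∀ α ∈ Set.Icc (0:ℝ) 1, μ 0 α = μ0) ∧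
  ∀ t : ℕ, ∀ α ∈ Set.Icc (0:ℝ) 1, ∀ x' : 𝒳,
    μ (t+1) α x' = ∑ x, μ t α x * ∑ u, πe α t x u * P x u (nbhd W (μ t) α) x'

/-- The law of the state of a single mean field agent with neighborhood mean field
G and policy π: X_0 ∼ μ₀, U_t ∼ π_t(·|X_t), X_{t+1} ∼ P(·|X_t,U_t,G_t). -/
noncomputable def stateLaw [Fintype 𝒳] [Fintype 𝒰] (P : 𝒳 → 𝒰 → (𝒳 → ℝ) → 𝒳 → ℝ)
    (μ0 : 𝒳 → ℝ) (G : ℕ → 𝒳 → ℝ) (π : ℕ → 𝒳 → 𝒰 → ℝ) : ℕ → 𝒳 → ℝ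
  | 0 => μ0
  | (t+1) => fun x' => ∑ x, stateLaw P μ0 G π t x * ∑ u, π t x u * P x u (G t) x'

/-- Mean field objective J(π) = E[Σ_{t<T} r(X_t,U_t,G_t)] of a single agent whose
neighborhood mean field is G. -/
noncomputable def Jmf [Fintype 𝒳] [Fintype 𝒰] (T : ℕ) (r : 𝒳 → 𝒰 → (𝒳 → ℝ) → ℝ)
    (P : 𝒳 → 𝒰 → (𝒳 → ℝ) → 𝒳 → ℝ) (μ0 : 𝒳 → ℝ) (G : ℕ → 𝒳 → ℝ) (π : ℕ → 𝒳 → 𝒰 → ℝ) : ℝ :=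
  ∑ t ∈ Finset.range T, ∑ x, stateLaw P μ0 G π t x * ∑ u, π t x u * r x u (G t)

/-- A Graphon Mean Field Equilibrium: a measurable policy ensemble 𝛑 and mean field
ensemble 𝛍 with 𝛍 = Ψ(𝛑) and π^α optimal for J^𝛍_α for every α ∈ [0,1]. -/
def IsGMFE [Fintype 𝒳] [Fintype 𝒰] (T : ℕ) (W : ℝ → ℝ → ℝ) (P : 𝒳 → 𝒰 → (𝒳 → ℝ) → 𝒳 → ℝ)
    (r : 𝒳 → 𝒰 → (𝒳 → ℝ) → ℝ) (μ0 : 𝒳 → ℝ)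
    (πe : ℝ → ℕ → 𝒳 → 𝒰 → ℝ) (μ : ℕ → ℝ → 𝒳 → ℝ) : Prop :=
  (∀ t x u, Measurable fun α => πe α t x u) ∧
  (∀ α ∈ Set.Icc (0:ℝ) 1, IsPolicy (πe α)) ∧
  IsMeanFieldOf W P μ0 πe μ ∧
  ∀ α ∈ Set.Icc (0:ℝ) 1, ∀ π' : ℕ → 𝒳 → 𝒰 → ℝ, IsPolicy π' →
    Jmf T r P μ0 (fun t => nbhd W (μ t) α) π' ≤ Jmf T r P μ0 (fun t => nbhd W (μ t) α) (πe α)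

/-- α ↦ π^α is Lipschitz continuous up to a finite set D of discontinuities. -/
def EnsembleLipschitzUpTo [Fintype 𝒳] [Fintype 𝒰] (πe : ℝ → ℕ → 𝒳 → 𝒰 → ℝ) : Prop :=
  ∃ (L : ℝ) (D : Finset ℝ), ∀ (t : ℕ) (x : 𝒳) (u : 𝒰),
    ∀ α ∈ Set.Icc (0:ℝ) 1, ∀ β ∈ Set.Icc (0:ℝ) 1,
      (∀ d ∈ D, d ∉ Set.uIcc α β) → |πe α t x u - πe β t x u| ≤ L * |α - β|

/-- Edge indicators of a simple (undirected) graph. -/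
def IsEdgeWeights {N : ℕ} (ξ : Fin N → Fin N → ℝ) : Prop :=
  (∀ i j, ξ i j = 0 ∨ ξ i j = 1) ∧ ∀ i j, ξ i j = ξ j i

/-- Empirical neighborhood mean field 𝔾ⁱ = (1/N) Σ_j ξ_{ij} δ_{X^j}. -/
noncomputable def empNbhd [Fintype 𝒳] [DecidableEq 𝒳] {N : ℕ} (ξ : Fin N → Fin N → ℝ)
    (X : Fin N → 𝒳) (i : Fin N) : 𝒳 → ℝ :=
  fun x => (N : ℝ)⁻¹ * ∑ j, ξ i j * (if X j = x then 1 else 0)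

/-- The joint law of the N agents' states at time t: X^i_0 ∼ μ₀ i.i.d.,
U^i_t ∼ π^i_t(·|X^i_t), X^i_{t+1} ∼ P(·|X^i_t,U^i_t,𝔾^i_t) conditionally independently. -/
noncomputable def jointLaw [Fintype 𝒳] [DecidableEq 𝒳] [Fintype 𝒰] {N : ℕ}
    (P : 𝒳 → 𝒰 → (𝒳 → ℝ) → 𝒳 → ℝ) (μ0 : 𝒳 → ℝ) (ξ : Fin N → Fin N → ℝ)
    (πs : Fin N → ℕ → 𝒳 → 𝒰 → ℝ) : ℕ → (Fin N → 𝒳) → ℝ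
  | 0 => fun X => ∏ i, μ0 (X i)
  | (t+1) => fun Y => ∑ X : Fin N → 𝒳, jointLaw P μ0 ξ πs t X *
      ∏ i, ∑ u, πs i t (X i) u * P (X i) u (empNbhd ξ X i) (Y i)

/-- The objective J^N_i = E[Σ_{t<T} r(X^i_t,U^i_t,𝔾^i_t)] of agent i in the N-agent game. -/
noncomputable def JN [Fintype 𝒳] [DecidableEq 𝒳] [Fintype 𝒰] {N : ℕ} (T : ℕ)
    (r : 𝒳 → 𝒰 → (𝒳 → ℝ) → ℝ) (P : 𝒳 → 𝒰 → (𝒳 → ℝ) → 𝒳 → ℝ) (μ0 : 𝒳 → ℝ)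
    (ξ : Fin N → Fin N → ℝ) (πs : Fin N → ℕ → 𝒳 → 𝒰 → ℝ) (i : Fin N) : ℝ :=
  ∑ t ∈ Finset.range T, ∑ X : Fin N → 𝒳, jointLaw P μ0 ξ πs t X *
    ∑ u, πs i t (X i) u * r (X i) u (empNbhd ξ X i)

/-- Γ_N(𝛑) = (π^{1/N},…,π^{N/N}) (agent i : Fin N has graphon index (i+1)/N). -/
noncomputable def gammaN (πe : ℝ → ℕ → 𝒳 → 𝒰 → ℝ) (N : ℕ) : Fin N → ℕ → 𝒳 → 𝒰 → ℝ :=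
  fun i => πe ((((i : ℕ) : ℝ) + 1) / N)

/-- The step graphon W_N of a finite graph: W_N(x,y) = ξ_{⌈Nx⌉,⌈Ny⌉}. -/
noncomputable def stepGraphon {N : ℕ} (ξ : Fin N → Fin N → ℝ) : ℝ → ℝ → ℝ := fun a b =>
  ∑ i : Fin N, ∑ j : Fin N,
    (if ((i : ℕ) : ℝ) / N < a ∧ a ≤ (((i : ℕ) : ℝ) + 1) / N then 1 else 0) *
    (if ((j : ℕ) : ℝ) / N < b ∧ b ≤ (((j : ℕ) : ℝ) + 1) / N then 1 else 0) * ξ i j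

/-- Assumption (W): ‖W_N − W‖_{L∞→L1} → 0, i.e.
sup_{‖g‖∞ ≤ 1} ∫₀¹ |∫₀¹ (W_N(α,β) − W(α,β)) g(β) dβ| dα → 0. -/
def OpConvergesTo (WN : (N : ℕ) → ℝ → ℝ → ℝ) (W : ℝ → ℝ → ℝ) : Prop :=
  ∀ ε > (0:ℝ), ∃ N₀ : ℕ, ∀ N ≥ N₀, ∀ g : ℝ → ℝ, Measurable g → (∀ β, |g β| ≤ 1) →
    (∫ α in Set.Ioc (0:ℝ) 1, |∫ β in Set.Ioc (0:ℝ) 1, (WN N α β - W α β) * g β|) ≤ ε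

/-- ‖W_N − W‖_{L∞→L1} = O(1/√N). -/
def OpRateSqrt (WN : (N : ℕ) → ℝ → ℝ → ℝ) (W : ℝ → ℝ → ℝ) : Prop :=
  ∃ C : ℝ, ∀ N : ℕ, 1 ≤ N → ∀ g : ℝ → ℝ, Measurable g → (∀ β, |g β| ≤ 1) →
    (∫ α in Set.Ioc (0:ℝ) 1, |∫ β in Set.Ioc (0:ℝ) 1, (WN N α β - W α β) * g β|) ≤ C / Real.sqrt N

/-- 𝛍^N_t(f) = ∫₀¹ f(X^{⌈Nα⌉}, α) dα, the integral of f against the random empirical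
step measure ensemble. -/
noncomputable def empInt [Fintype 𝒳] {N : ℕ} (f : 𝒳 → ℝ → ℝ) (X : Fin N → 𝒳) : ℝ :=
  ∑ i : Fin N, ∫ α in Set.Ioc (((i : ℕ) : ℝ) / N) ((((i : ℕ) : ℝ) + 1) / N), f (X i) α

/-- 𝛍_t(f) = ∫₀¹ Σ_x f(x,α) μ^α_t(x) dα. -/
noncomputable def mfInt [Fintype 𝒳] (f : 𝒳 → ℝ → ℝ) (ν : ℝ → 𝒳 → ℝ) : ℝ :=
  ∫ α in Set.Ioc (0:ℝ) 1, ∑ x, f x α * ν α x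

/-- The representative α_m = (m+1)/M of the m-th equivalence class Ĩ_m = (m/M,(m+1)/M]. -/
noncomputable def rep (M : ℕ) (m : Fin M) : ℝ := (((m : ℕ) : ℝ) + 1) / M

/-- Discretized neighborhood mean field 𝔾̂^{α_m} = (1/M) Σ_n W(α_m,α_n) ν^{α_n}. -/
noncomputable def approxNbhd [Fintype 𝒳] {M : ℕ} (W : ℝ → ℝ → ℝ) (ν : Fin M → 𝒳 → ℝ)
    (m : Fin M) : 𝒳 → ℝ :=
  fun x => (M : ℝ)⁻¹ * ∑ n, W (rep M m) (rep M n) * ν n x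

/-- The approximate mean field μ̂ = Ψ̂(𝛑) of the M equivalence classes method. -/
noncomputable def approxMF [Fintype 𝒳] [Fintype 𝒰] {M : ℕ} (W : ℝ → ℝ → ℝ)
    (P : 𝒳 → 𝒰 → (𝒳 → ℝ) → 𝒳 → ℝ) (μ0 : 𝒳 → ℝ) (πm : Fin M → ℕ → 𝒳 → 𝒰 → ℝ) :
    ℕ → Fin M → 𝒳 → ℝ
  | 0 => fun _ => μ0
  | (t+1) => fun m x' => ∑ x, approxMF W P μ0 πm t m x *
      ∑ u, πm m t x u * P x u (approxNbhd W (approxMF W P μ0 πm t) m) x'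

/-- A solution (𝛑, 𝛍) of the M equivalence classes method: 𝛑 is determined by policies
π^{α_m} (one per class), each optimal for the generated approximate mean field 𝛍 = Ψ̂(𝛑). -/
def IsEqClassSolution [Fintype 𝒳] [Fintype 𝒰] (T : ℕ) {M : ℕ} (W : ℝ → ℝ → ℝ)
    (P : 𝒳 → 𝒰 → (𝒳 → ℝ) → 𝒳 → ℝ) (r : 𝒳 → 𝒰 → (𝒳 → ℝ) → ℝ) (μ0 : 𝒳 → ℝ)
    (πm : Fin M → ℕ → 𝒳 → 𝒰 → ℝ) : Prop :=
  (∀ m, IsPolicy (πm m)) ∧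
  ∀ m, ∀ π' : ℕ → 𝒳 → 𝒰 → ℝ, IsPolicy π' →
    Jmf T r P μ0 (fun t => approxNbhd W (approxMF W P μ0 πm t) m) π'
      ≤ Jmf T r P μ0 (fun t => approxNbhd W (approxMF W P μ0 πm t) m) (πm m)

/-- The optimal action value function Q with k steps to go from time t,
Q(t,x,u) = r(x,u,G_t) + Σ_{x'} P(x'|x,u,G_t) max_{u'} Q(t+1,x',u'). -/
noncomputable def Qfun [Fintype 𝒳] [Fintype 𝒰] [Nonempty 𝒰] (r : 𝒳 → 𝒰 → (𝒳 → ℝ) → ℝ)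
    (P : 𝒳 → 𝒰 → (𝒳 → ℝ) → 𝒳 → ℝ) (G : ℕ → 𝒳 → ℝ) : ℕ → ℕ → 𝒳 → 𝒰 → ℝ
  | 0 => fun _ _ _ => 0
  | (k+1) => fun t x u => r x u (G t) + ∑ x', P x u (G t) x' *
      Finset.univ.sup' Finset.univ_nonempty (fun u' => Qfun r P G k (t+1) x' u')

/-- The Boltzmann (softmax) policy Φ̂_η(𝛍) of the M equivalence classes method with
horizon T, temperature η and block mean field ν. -/
noncomputable def boltzmann [Fintype 𝒳] [Fintype 𝒰] [Nonempty 𝒰] (T : ℕ) (η : ℝ)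
    (r : 𝒳 → 𝒰 → (𝒳 → ℝ) → ℝ) (P : 𝒳 → 𝒰 → (𝒳 → ℝ) → 𝒳 → ℝ) (W : ℝ → ℝ → ℝ) {M : ℕ}
    (ν : ℕ → Fin M → 𝒳 → ℝ) : Fin M → ℕ → 𝒳 → 𝒰 → ℝ :=
  fun m t x u =>
    Real.exp (Qfun r P (fun s => approxNbhd W (ν s) m) (T - t) t x u / η) /
      ∑ u' : 𝒰, Real.exp (Qfun r P (fun s => approxNbhd W (ν s) m) (T - t) t x u' / η)

/-- One step 𝛍 ↦ Ψ̂(Φ̂_η(𝛍)) of the Boltzmann fixed point iteration. -/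
noncomputable def boltzIter [Fintype 𝒳] [Fintype 𝒰] [Nonempty 𝒰] (T : ℕ) (η : ℝ)
    (r : 𝒳 → 𝒰 → (𝒳 → ℝ) → ℝ) (P : 𝒳 → 𝒰 → (𝒳 → ℝ) → 𝒳 → ℝ) (W : ℝ → ℝ → ℝ) (μ0 : 𝒳 → ℝ)
    {M : ℕ} (ν : ℕ → Fin M → 𝒳 → ℝ) : ℕ → Fin M → 𝒳 → ℝ :=
  fun t => approxMF W P μ0 (boltzmann T η r P W ν) t

/-!
Conditionally on the present states, the transitions of the agents are independent, so the empirical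
average of any bounded statistic of the next states has mean fluctuation at most `1 / √N`. By
induction on time, all such averages concentrate around their values under the limiting laws: the
transition kernels depend on the neighborhood mean fields in a Lipschitz way, and the deviating
agent, whatever its policy, only costs `2 / N` in an average over agents. The induction needs the
neighborhoods of the limiting laws in the finite graph to approach those in the graphon on average
over the agents; this is operator convergence of the step graphons, together with dominated
convergence along the grid `k / N` for functions that are almost everywhere continuous. Markov's
inequality turns this average into a bound for a large set of agents. For an agent in that set,
replacing its empirical neighborhoods by the limiting ones, one time step after another, costs at
most a constant times the sum of the mean neighborhood errors, which are uniformly small.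
-/

open scoped Matrix
open Matrix (dotProduct_mulVec)

section Simplex

variable {𝒴 : Type*} [Fintype 𝒳] [Fintype 𝒴] {q q' f g : 𝒳 → ℝ} {M : ℝ}

lemma dotProduct_const_of_mem_simplex (hq : q ∈ simplex 𝒳) (c : ℝ) :
    (q ⬝ᵥ fun _ => c) = c := by
  rw [dotProduct, ← Finset.sum_mul, hq.2, one_mul]

lemma dotProduct_mono (hq : 0 ≤ q) (hfg : ∀ x, f x ≤ g x) : q ⬝ᵥ f ≤ q ⬝ᵥ g :=
  dotProduct_le_dotProduct_of_nonneg_left hfg hq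

lemma dotProduct_le_of_mem_simplex (hq : q ∈ simplex 𝒳) (hf : ∀ x, f x ≤ M) : q ⬝ᵥ f ≤ M :=
  (dotProduct_mono hq.1 hf).trans_eq (dotProduct_const_of_mem_simplex hq M)

lemma abs_dotProduct_le_dotProduct_abs (hq : 0 ≤ q) (f : 𝒳 → ℝ) :
    |q ⬝ᵥ f| ≤ q ⬝ᵥ fun x => |f x| :=
  (Finset.abs_sum_le_sum_abs _ _).trans_eq <|
    Finset.sum_congr rfl fun x _ => by rw [abs_mul, abs_of_nonneg (hq x)]

lemma abs_dotProduct_le_of_mem_simplex (hq : q ∈ simplex 𝒳) (hf : ∀ x, |f x| ≤ M) :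
    |q ⬝ᵥ f| ≤ M :=
  (abs_dotProduct_le_dotProduct_abs hq.1 f).trans (dotProduct_le_of_mem_simplex hq hf)

lemma sq_dotProduct_le_dotProduct_sq (hq : q ∈ simplex 𝒳) (f : 𝒳 → ℝ) :
    (q ⬝ᵥ f) ^ 2 ≤ q ⬝ᵥ fun x => f x ^ 2 := by
  have cauchy_schwarz := Finset.sum_sq_le_sum_mul_sum_of_sq_le_mul Finset.univ
    (r := fun x => q x * f x) (f := q) (g := fun x => q x * f x ^ 2) (fun x _ => hq.1 x)
    (fun x _ => mul_nonneg (hq.1 x) (sq_nonneg _)) (fun x _ => le_of_eq (by ring))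
  rwa [hq.2, one_mul] at cauchy_schwarz

lemma dotProduct_sq_sub_le_one (hq : q ∈ simplex 𝒳) (hf : ∀ x, |f x| ≤ 1) :
    (q ⬝ᵥ fun x => (f x - q ⬝ᵥ f) ^ 2) ≤ 1 := by
  have variance_eq : (q ⬝ᵥ fun x => (f x - q ⬝ᵥ f) ^ 2) =
      (q ⬝ᵥ fun x => f x ^ 2) - (q ⬝ᵥ f) ^ 2 := by
    have expand : (fun x => (f x - q ⬝ᵥ f) ^ 2) =
        (fun x => f x ^ 2) - (2 * (q ⬝ᵥ f)) • f + fun _ => (q ⬝ᵥ f) ^ 2 := by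
      ext x
      simp only [Pi.add_apply, Pi.sub_apply, Pi.smul_apply, smul_eq_mul]
      ring
    rw [expand, dotProduct_add, dotProduct_sub, dotProduct_smul,
      dotProduct_const_of_mem_simplex hq, smul_eq_mul]
    ring
  rw [variance_eq]
  exact (sub_le_self _ (sq_nonneg _)).trans <|
    dotProduct_le_of_mem_simplex hq fun x => (sq_le_one_iff_abs_le_one _).2 (hf x)

lemma abs_apply_le_one_of_mem_simplex (hq : q ∈ simplex 𝒳) (x : 𝒳) : |q x| ≤ 1 := by
  rw [abs_of_nonneg (hq.1 x), ← hq.2]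
  exact Finset.single_le_sum (fun y _ => hq.1 y) (Finset.mem_univ x)

lemma vecMul_mem_simplex (hq : q ∈ simplex 𝒳) {A : Matrix 𝒳 𝒴 ℝ} (hA : ∀ x, A x ∈ simplex 𝒴) :
    q ᵥ* A ∈ simplex 𝒴 := by
  refine ⟨fun y => Finset.sum_nonneg fun x _ => mul_nonneg (hq.1 x) ((hA x).1 y), ?_⟩
  have row_sums : A *ᵥ 1 = 1 := funext fun x => (dotProduct_one (A x)).trans (hA x).2
  rw [← dotProduct_one, ← dotProduct_mulVec, row_sums, dotProduct_one, hq.2]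

lemma l1dist_nonneg (ν ν' : 𝒳 → ℝ) : 0 ≤ l1dist ν ν' :=
  Finset.sum_nonneg fun _ _ => abs_nonneg _

lemma l1dist_triangle (ν₁ ν₂ ν₃ : 𝒳 → ℝ) : l1dist ν₁ ν₃ ≤ l1dist ν₁ ν₂ + l1dist ν₂ ν₃ := by
  simp only [l1dist, ← Finset.sum_add_distrib]
  exact Finset.sum_le_sum fun x _ => abs_sub_le _ _ _

lemma l1dist_le_two (hq : q ∈ simplex 𝒳) (hq' : q' ∈ simplex 𝒳) : l1dist q q' ≤ 2 :=
  calc ∑ x, |q x - q' x| ≤ ∑ x, (q x + q' x) := Finset.sum_le_sum fun x _ =>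
        (abs_sub _ _).trans_eq (by rw [abs_of_nonneg (hq.1 x), abs_of_nonneg (hq'.1 x)])
    _ = 2 := by rw [Finset.sum_add_distrib, hq.2, hq'.2, one_add_one_eq_two]

lemma abs_dotProduct_sub_le_mul_l1dist (hf : ∀ x, |f x| ≤ M) :
    |q ⬝ᵥ f - q' ⬝ᵥ f| ≤ M * l1dist q q' := by
  rw [← sub_dotProduct, dotProduct, l1dist, Finset.mul_sum]
  refine (Finset.abs_sum_le_sum_abs _ _).trans (Finset.sum_le_sum fun x _ => ?_)
  rw [abs_mul, mul_comm]
  exact mul_le_mul_of_nonneg_right (hf x) (abs_nonneg _)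

end Simplex

section ProductLaw

variable {ι : Type*} [Fintype ι] [Fintype 𝒳] {q f g : ι → 𝒳 → ℝ}

/-- The joint mass function of independent random variables `Y i ∼ q i`. -/
def prodLaw (q : ι → 𝒳 → ℝ) (Y : ι → 𝒳) : ℝ := ∏ i, q i (Y i)

variable [DecidableEq ι]

lemma prodLaw_dotProduct_prod (q f : ι → 𝒳 → ℝ) :
    (prodLaw q ⬝ᵥ fun Y => ∏ i, f i (Y i)) = ∏ i, q i ⬝ᵥ f i := by
  simp only [prodLaw, dotProduct, ← Finset.prod_mul_distrib, Finset.prod_univ_sum,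
    Fintype.piFinset_univ]

lemma prodLaw_mem_simplex (hq : ∀ i, q i ∈ simplex 𝒳) : prodLaw q ∈ simplex (ι → 𝒳) := by
  refine ⟨fun Y => Finset.prod_nonneg fun i _ => (hq i).1 _, ?_⟩
  simpa [dotProduct, (hq _).2] using prodLaw_dotProduct_prod q fun _ _ => 1

lemma prodLaw_dotProduct_apply_mul_apply (hq : ∀ i, q i ∈ simplex 𝒳) {i k : ι} (hik : i ≠ k)
    (f g : 𝒳 → ℝ) :
    (prodLaw q ⬝ᵥ fun Y => f (Y i) * g (Y k)) = (q i ⬝ᵥ f) * (q k ⬝ᵥ g) := by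
  let factors : ι → 𝒳 → ℝ := Function.update (Function.update (fun _ _ => 1) k g) i f
  have off_pair : ∀ j ∉ ({i, k} : Finset ι), factors j = fun _ => 1 := fun j hj => by
    simp only [Finset.mem_insert, Finset.mem_singleton, not_or] at hj
    simp [factors, hj.1, hj.2]
  have prod_eq (F : ι → ℝ) (hF : ∀ j ∉ ({i, k} : Finset ι), F j = 1) : ∏ j, F j = F i * F k := by
    rw [← Finset.prod_pair hik]
    exact (Finset.prod_subset (Finset.subset_univ _) fun j _ hj => hF j hj).symm
  have at_i : factors i = f := by simp [factors]
  have at_k : factors k = g := by simp [factors, hik.symm]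
  have h := prodLaw_dotProduct_prod q factors
  rw [prod_eq (fun j => q j ⬝ᵥ factors j) fun j hj => by
    rw [off_pair j hj, dotProduct_const_of_mem_simplex (hq j)], at_i, at_k] at h
  rw [← h]
  congr 1
  ext Y
  rw [prod_eq (fun j => factors j (Y j)) fun j hj => by rw [off_pair j hj], at_i, at_k]

lemma prodLaw_dotProduct_apply (hq : ∀ i, q i ∈ simplex 𝒳) (i : ι) (f : 𝒳 → ℝ) :
    (prodLaw q ⬝ᵥ fun Y => f (Y i)) = q i ⬝ᵥ f := by
  have h := prodLaw_dotProduct_prod q (Function.update (fun _ _ => 1) i f)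
  rw [Fintype.prod_eq_single i fun j hj => by
    rw [Function.update_of_ne hj, dotProduct_const_of_mem_simplex (hq j)],
    Function.update_self] at h
  rw [← h]
  congr 1
  ext Y
  rw [Fintype.prod_eq_single i fun j hj => by rw [Function.update_of_ne hj], Function.update_self]

lemma prodLaw_dotProduct_sum_sq (hq : ∀ i, q i ∈ simplex 𝒳) (hg : ∀ i, q i ⬝ᵥ g i = 0) :
    (prodLaw q ⬝ᵥ fun Y => (∑ i, g i (Y i)) ^ 2) = ∑ i, q i ⬝ᵥ fun x => g i x ^ 2 := by
  have expand : (fun Y : ι → 𝒳 => (∑ i, g i (Y i)) ^ 2) =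
      ∑ i, ∑ k, fun Y => g i (Y i) * g k (Y k) := by
    ext Y
    simp only [sq, Finset.sum_mul_sum, Finset.sum_apply]
  simp only [expand, dotProduct_sum]
  refine Finset.sum_congr rfl fun i _ => ?_
  rw [Fintype.sum_eq_single i fun k hk => by
    rw [prodLaw_dotProduct_apply_mul_apply hq hk.symm, hg i, zero_mul]]
  simp only [← sq]
  exact prodLaw_dotProduct_apply hq i fun x => g i x ^ 2

lemma prodLaw_dotProduct_abs_sum_sub_le (hq : ∀ i, q i ∈ simplex 𝒳)
    (hf : ∀ i x, |f i x| ≤ 1) :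
    (prodLaw q ⬝ᵥ fun Y => |∑ i, (f i (Y i) - q i ⬝ᵥ f i)|) ≤ √(Fintype.card ι) := by
  let g (i : ι) (x : 𝒳) : ℝ := f i x - q i ⬝ᵥ f i
  have centered (i : ι) : q i ⬝ᵥ g i = 0 :=
    (dotProduct_sub (q i) (f i) fun _ => q i ⬝ᵥ f i).trans <| by
      rw [dotProduct_const_of_mem_simplex (hq i), sub_self]
  refine Real.le_sqrt_of_sq_le ?_
  calc (prodLaw q ⬝ᵥ fun Y => |∑ i, g i (Y i)|) ^ 2
      ≤ prodLaw q ⬝ᵥ fun Y => |∑ i, g i (Y i)| ^ 2 :=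
        sq_dotProduct_le_dotProduct_sq (prodLaw_mem_simplex hq) _
    _ = ∑ i, q i ⬝ᵥ fun x => g i x ^ 2 := by
        simp only [sq_abs]
        exact prodLaw_dotProduct_sum_sq hq centered
    _ ≤ ∑ _i : ι, 1 := Finset.sum_le_sum fun i _ => dotProduct_sq_sub_le_one (hq i) (hf i)
    _ = Fintype.card ι := by simp

end ProductLaw

section Concentration

variable [Fintype 𝒳] {N : ℕ}

/-- Quantitative law of large numbers, uniform over bounded test functions: under the joint law `Q`
of `N` agents, every empirical average of a statistic `f j (X j)` with `|f j| ≤ 1` is within `K` in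
mean of its value under the individual laws `m j`. -/
def ConcentratesAround (Q : (Fin N → 𝒳) → ℝ) (m : Fin N → 𝒳 → ℝ) (K : ℝ) : Prop :=
  ∀ f : Fin N → 𝒳 → ℝ, (∀ j x, |f j x| ≤ 1) →
    (Q ⬝ᵥ fun X => |(N : ℝ)⁻¹ * ∑ j, (f j (X j) - m j ⬝ᵥ f j)|) ≤ K

lemma concentratesAround_prodLaw {q : Fin N → 𝒳 → ℝ} (hq : ∀ j, q j ∈ simplex 𝒳) :
    ConcentratesAround (prodLaw q) q (1 / √N) := fun f hf => by
  have scale : (fun X : Fin N → 𝒳 => |(N : ℝ)⁻¹ * ∑ j, (f j (X j) - q j ⬝ᵥ f j)|) =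
      (N : ℝ)⁻¹ • fun X => |∑ j, (f j (X j) - q j ⬝ᵥ f j)| :=
    funext fun X => by rw [abs_mul, abs_inv, Nat.abs_cast, Pi.smul_apply, smul_eq_mul]
  rw [scale, dotProduct_smul, smul_eq_mul, ← Real.sqrt_div_self', div_eq_inv_mul]
  refine mul_le_mul_of_nonneg_left ?_ (by positivity)
  simpa only [Fintype.card_fin] using prodLaw_dotProduct_abs_sum_sub_le hq hf

lemma abs_average_sub_le (a b c d : Fin N → ℝ) :
    |(N : ℝ)⁻¹ * ∑ j, (a j - d j)| ≤ |(N : ℝ)⁻¹ * ∑ j, (a j - b j)| +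
      ((N : ℝ)⁻¹ * ∑ j, |b j - c j| + |(N : ℝ)⁻¹ * ∑ j, (c j - d j)|) := by
  have split : (N : ℝ)⁻¹ * ∑ j, (a j - d j) = (N : ℝ)⁻¹ * ∑ j, (a j - b j) +
      ((N : ℝ)⁻¹ * ∑ j, (b j - c j) + (N : ℝ)⁻¹ * ∑ j, (c j - d j)) := by
    simp only [← mul_add, ← Finset.sum_add_distrib, sub_add_sub_cancel]
  have middle : |(N : ℝ)⁻¹ * ∑ j, (b j - c j)| ≤ (N : ℝ)⁻¹ * ∑ j, |b j - c j| := by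
    rw [abs_mul, abs_inv, Nat.abs_cast]
    exact mul_le_mul_of_nonneg_left (Finset.abs_sum_le_sum_abs _ _) (by positivity)
  rw [split]
  exact (abs_add_le _ _).trans
    (add_le_add_right ((abs_add_le _ _).trans (add_le_add_left middle _)) _)

/-- The fluctuation at the next time splits into the independent noise of the transitions, the
error of replacing the interacting kernels by the reference kernels, and the fluctuation of the
statistics `k j *ᵥ f j` at the present time. -/
lemma ConcentratesAround.step {Q : (Fin N → 𝒳) → ℝ} {m : Fin N → 𝒳 → ℝ} {K δ : ℝ}
    (hQm : ConcentratesAround Q m K) (hQ : Q ∈ simplex (Fin N → 𝒳))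
    {q : (Fin N → 𝒳) → Fin N → 𝒳 → ℝ} (hq : ∀ X j, q X j ∈ simplex 𝒳)
    {k : Fin N → Matrix 𝒳 𝒳 ℝ} (hk : ∀ j x, k j x ∈ simplex 𝒳)
    (hδ : (Q ⬝ᵥ fun X => (N : ℝ)⁻¹ * ∑ j, l1dist (q X j) (k j (X j))) ≤ δ) :
    ConcentratesAround (Q ᵥ* fun X => prodLaw (q X)) (fun j => m j ᵥ* k j)
      (1 / √N + δ + K) := fun f hf => by
  let g (j : Fin N) : 𝒳 → ℝ := k j *ᵥ f j
  have hg (j : Fin N) (x : 𝒳) : |g j x| ≤ 1 := abs_dotProduct_le_of_mem_simplex (hk j x) (hf j)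
  let fluctuation (X : Fin N → 𝒳) : ℝ := |(N : ℝ)⁻¹ * ∑ j, (g j (X j) - m j ⬝ᵥ g j)|
  let mismatch (X : Fin N → 𝒳) : ℝ := (N : ℝ)⁻¹ * ∑ j, l1dist (q X j) (k j (X j))
  have pointwise (X Y : Fin N → 𝒳) : |(N : ℝ)⁻¹ * ∑ j, (f j (Y j) - m j ⬝ᵥ g j)| ≤
      |(N : ℝ)⁻¹ * ∑ j, (f j (Y j) - q X j ⬝ᵥ f j)| + (mismatch X + fluctuation X) := by
    refine (abs_average_sub_le _ (fun j => q X j ⬝ᵥ f j) (fun j => g j (X j)) _).trans ?_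
    refine add_le_add_right (add_le_add_left (mul_le_mul_of_nonneg_left
      (Finset.sum_le_sum fun j _ => ?_) (by positivity)) _) _
    exact (abs_dotProduct_sub_le_mul_l1dist (hf j)).trans_eq (one_mul _)
  have conditional (X : Fin N → 𝒳) :
      (prodLaw (q X) ⬝ᵥ fun Y => |(N : ℝ)⁻¹ * ∑ j, (f j (Y j) - m j ⬝ᵥ g j)|) ≤
        1 / √N + (mismatch X + fluctuation X) := by
    have hqX := prodLaw_mem_simplex (hq X)
    refine (dotProduct_mono hqX.1 (pointwise X)).trans ?_
    refine (dotProduct_add _ _ _).trans_le ?_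
    rw [dotProduct_const_of_mem_simplex hqX]
    exact add_le_add_left (concentratesAround_prodLaw (hq X) f hf) _
  calc ((Q ᵥ* fun X => prodLaw (q X)) ⬝ᵥ
        fun Y => |(N : ℝ)⁻¹ * ∑ j, (f j (Y j) - (m j ᵥ* k j) ⬝ᵥ f j)|)
      = Q ⬝ᵥ fun X => prodLaw (q X) ⬝ᵥ
          fun Y => |(N : ℝ)⁻¹ * ∑ j, (f j (Y j) - m j ⬝ᵥ g j)| := by
        simp only [g, dotProduct_mulVec]
        exact (dotProduct_mulVec Q (fun X => prodLaw (q X)) _).symm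
    _ ≤ Q ⬝ᵥ ((fun _ => 1 / √N) + (mismatch + fluctuation)) := dotProduct_mono hQ.1 conditional
    _ ≤ 1 / √N + δ + K := by
        rw [dotProduct_add, dotProduct_add, dotProduct_const_of_mem_simplex hQ, add_assoc]
        exact add_le_add_right (add_le_add hδ (hQm g hg)) _

end Concentration

section Dynamics

variable [Fintype 𝒳] [Fintype 𝒰] {P : 𝒳 → 𝒰 → (𝒳 → ℝ) → 𝒳 → ℝ} {LP : ℝ} {σ : 𝒳 → 𝒰 → ℝ}
  {G G' : 𝒳 → ℝ}

/-- The transition matrix of the state of an agent that applies the decision rule `σ` while its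
neighborhood mean field is `G`. -/
def agentKernel (P : 𝒳 → 𝒰 → (𝒳 → ℝ) → 𝒳 → ℝ) (σ : 𝒳 → 𝒰 → ℝ) (G : 𝒳 → ℝ) : Matrix 𝒳 𝒳 ℝ :=
  fun x => σ x ᵥ* fun u => P x u G

lemma agentKernel_mem_simplex (hP : IsKernel P) (hσ : ∀ x, σ x ∈ simplex 𝒰)
    (hG : G ∈ subProb 𝒳) (x : 𝒳) : agentKernel P σ G x ∈ simplex 𝒳 :=
  vecMul_mem_simplex (hσ x) fun u => hP x u G hG

lemma l1dist_vecMul_le {q : 𝒰 → ℝ} (hq : 0 ≤ q) (A B : Matrix 𝒰 𝒳 ℝ) :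
    l1dist (q ᵥ* A) (q ᵥ* B) ≤ q ⬝ᵥ fun u => l1dist (A u) (B u) :=
  calc ∑ x, |(q ᵥ* A) x - (q ᵥ* B) x| ≤ ∑ x, q ⬝ᵥ fun u => |A u x - B u x| :=
        Finset.sum_le_sum fun x _ => by
          rw [← Pi.sub_apply, ← Matrix.vecMul_sub]
          exact abs_dotProduct_le_dotProduct_abs hq _
    _ = q ⬝ᵥ fun u => l1dist (A u) (B u) := by
        rw [← dotProduct_sum]
        congr 1
        ext u
        rw [Finset.sum_apply, l1dist]

lemma KernelLipschitz.l1dist_agentKernel_le (hPLip : KernelLipschitz P LP)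
    (hσ : ∀ x, σ x ∈ simplex 𝒰) (hG : G ∈ subProb 𝒳) (hG' : G' ∈ subProb 𝒳) (x : 𝒳) :
    l1dist (agentKernel P σ G x) (agentKernel P σ G' x) ≤ LP * l1dist G G' :=
  (l1dist_vecMul_le (hσ x).1 _ _).trans <|
    dotProduct_le_of_mem_simplex (hσ x) fun u => hPLip x u G G' hG hG'

variable {μ0 : 𝒳 → ℝ}

lemma stateLaw_succ (G : ℕ → 𝒳 → ℝ) (π : ℕ → 𝒳 → 𝒰 → ℝ) (t : ℕ) :
    stateLaw P μ0 G π (t + 1) = stateLaw P μ0 G π t ᵥ* agentKernel P (π t) (G t) :=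
  rfl

lemma IsMeanFieldOf.succ {W : ℝ → ℝ → ℝ} {πe : ℝ → ℕ → 𝒳 → 𝒰 → ℝ} {μ : ℕ → ℝ → 𝒳 → ℝ}
    (hμ : IsMeanFieldOf W P μ0 πe μ) (t : ℕ) {α : ℝ} (hα : α ∈ Set.Icc (0 : ℝ) 1) :
    μ (t + 1) α = μ t α ᵥ* agentKernel P (πe α t) (nbhd W (μ t) α) :=
  funext (hμ.2.2 t α hα)

variable [DecidableEq 𝒳] {N : ℕ} {ξ : Fin N → Fin N → ℝ} {πs : Fin N → ℕ → 𝒳 → 𝒰 → ℝ}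

lemma jointLaw_zero : jointLaw P μ0 ξ πs 0 = prodLaw fun _ => μ0 :=
  rfl

lemma jointLaw_succ (t : ℕ) :
    jointLaw P μ0 ξ πs (t + 1) = jointLaw P μ0 ξ πs t ᵥ* fun X =>
      prodLaw fun i => agentKernel P (πs i t) (empNbhd ξ X i) (X i) :=
  rfl

lemma empNbhd_mem_subProb (hξ : ∀ i j, ξ i j ∈ Set.Icc (0 : ℝ) 1) (X : Fin N → 𝒳) (i : Fin N) :
    empNbhd ξ X i ∈ subProb 𝒳 := by
  constructor
  · refine fun x => mul_nonneg (by positivity) (Finset.sum_nonneg fun j _ => ?_)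
    exact mul_nonneg (hξ i j).1 (by positivity)
  calc ∑ x, empNbhd ξ X i x = (N : ℝ)⁻¹ * ∑ j, ξ i j := by
        simp only [empNbhd]
        rw [← Finset.mul_sum, Finset.sum_comm]
        simp only [mul_ite, mul_one, mul_zero, Finset.sum_ite_eq, Finset.mem_univ, if_true]
    _ ≤ (N : ℝ)⁻¹ * ∑ _j : Fin N, 1 :=
        mul_le_mul_of_nonneg_left (Finset.sum_le_sum fun j _ => (hξ i j).2) (by positivity)
    _ ≤ 1 := by simpa using inv_mul_le_one

lemma jointLaw_mem_simplex (hP : IsKernel P) (hμ0 : μ0 ∈ simplex 𝒳)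
    (hξ : ∀ i j, ξ i j ∈ Set.Icc (0 : ℝ) 1) (hπs : ∀ i, IsPolicy (πs i)) (t : ℕ) :
    jointLaw P μ0 ξ πs t ∈ simplex (Fin N → 𝒳) := by
  induction t with
  | zero => exact prodLaw_mem_simplex fun _ => hμ0
  | succ t ih =>
    exact vecMul_mem_simplex ih fun X => prodLaw_mem_simplex fun i =>
      agentKernel_mem_simplex hP (hπs i t) (empNbhd_mem_subProb hξ X i) (X i)

/-- The mean `L¹` error of approximating the empirical neighborhood mean field of agent `i` by `G`
when the agents have joint law `Q`. -/
noncomputable def meanNbhdError (Q : (Fin N → 𝒳) → ℝ) (ξ : Fin N → Fin N → ℝ) (i : Fin N)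
    (G : 𝒳 → ℝ) : ℝ :=
  Q ⬝ᵥ fun X => l1dist (empNbhd ξ X i) G

/-- The neighborhood mean field of agent `i` when the states of the agents are replaced by their
individual laws `m`. -/
noncomputable def marginalNbhd (ξ : Fin N → Fin N → ℝ) (m : Fin N → 𝒳 → ℝ) (i : Fin N) : 𝒳 → ℝ :=
  fun x => (N : ℝ)⁻¹ * ∑ j, ξ i j * m j x

lemma meanNbhdError_nonneg {Q : (Fin N → 𝒳) → ℝ} (hQ : 0 ≤ Q) (i : Fin N) (G : 𝒳 → ℝ) :
    0 ≤ meanNbhdError Q ξ i G :=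
  dotProduct_nonneg_of_nonneg hQ fun _ => l1dist_nonneg _ _

lemma ConcentratesAround.meanNbhdError_le {Q : (Fin N → 𝒳) → ℝ} {m : Fin N → 𝒳 → ℝ} {K : ℝ}
    (hQm : ConcentratesAround Q m K) (hQ : Q ∈ simplex (Fin N → 𝒳))
    (hξ : ∀ i j, ξ i j ∈ Set.Icc (0 : ℝ) 1) (i : Fin N) (G : 𝒳 → ℝ) :
    meanNbhdError Q ξ i G ≤ Fintype.card 𝒳 * K + l1dist (marginalNbhd ξ m i) G := by
  let edge (x : 𝒳) (j : Fin N) (y : 𝒳) : ℝ := ξ i j * if y = x then 1 else 0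
  have edge_abs_le_one (x : 𝒳) (j : Fin N) (y : 𝒳) : |edge x j y| ≤ 1 := by
    have hξij : |ξ i j| ≤ 1 := abs_le.2 ⟨by linarith [(hξ i j).1], (hξ i j).2⟩
    by_cases hyx : y = x <;> simp [edge, hyx, hξij]
  have marginal (x : 𝒳) (j : Fin N) : m j ⬝ᵥ edge x j = ξ i j * m j x := by
    simp [edge, dotProduct, mul_comm]
  have emp_sub (X : Fin N → 𝒳) : l1dist (empNbhd ξ X i) (marginalNbhd ξ m i) =
      ∑ x, |(N : ℝ)⁻¹ * ∑ j, (edge x j (X j) - m j ⬝ᵥ edge x j)| := by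
    simp only [l1dist, empNbhd, marginalNbhd, marginal, edge, Finset.sum_sub_distrib, mul_sub]
  calc meanNbhdError Q ξ i G
      ≤ Q ⬝ᵥ ((∑ x, fun X => |(N : ℝ)⁻¹ * ∑ j, (edge x j (X j) - m j ⬝ᵥ edge x j)|) +
          fun _ => l1dist (marginalNbhd ξ m i) G) := dotProduct_mono hQ.1 fun X => by
        rw [Pi.add_apply, Finset.sum_apply, ← emp_sub]
        exact l1dist_triangle _ _ _
    _ ≤ ∑ _x : 𝒳, K + l1dist (marginalNbhd ξ m i) G := by
        rw [dotProduct_add, dotProduct_sum, dotProduct_const_of_mem_simplex hQ]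
        exact add_le_add_left (Finset.sum_le_sum fun x _ => hQm _ (edge_abs_le_one x)) _
    _ = Fintype.card 𝒳 * K + l1dist (marginalNbhd ξ m i) G := by simp

end Dynamics

section Deviation

variable [Fintype 𝒳] [DecidableEq 𝒳] [Fintype 𝒰] {P : 𝒳 → 𝒰 → (𝒳 → ℝ) → 𝒳 → ℝ} {LP : ℝ}
  {μ0 : 𝒳 → ℝ} {N : ℕ} {ξ : Fin N → Fin N → ℝ} {πs : Fin N → ℕ → 𝒳 → 𝒰 → ℝ} {G : ℕ → 𝒳 → ℝ}

lemma abs_jointLaw_apply_sub_stateLaw_le (hP : IsKernel P) (hPLip : KernelLipschitz P LP)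
    (hμ0 : μ0 ∈ simplex 𝒳) (hξ : ∀ i j, ξ i j ∈ Set.Icc (0 : ℝ) 1)
    (hπs : ∀ i, IsPolicy (πs i)) (hG : ∀ t, G t ∈ subProb 𝒳) (i : Fin N) {M : ℝ} (t : ℕ)
    {f : 𝒳 → ℝ} (hf : ∀ x, |f x| ≤ M) :
    |(jointLaw P μ0 ξ πs t ⬝ᵥ fun X => f (X i)) - stateLaw P μ0 G (πs i) t ⬝ᵥ f| ≤
      M * LP * ∑ s ∈ Finset.range t, meanNbhdError (jointLaw P μ0 ξ πs s) ξ i (G s) := by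
  induction t generalizing f with
  | zero =>
    rw [jointLaw_zero, prodLaw_dotProduct_apply (fun _ => hμ0), stateLaw, sub_self, abs_zero,
      Finset.sum_range_zero, mul_zero]
  | succ t ih =>
    let Q := jointLaw P μ0 ξ πs t
    let A : (𝒳 → ℝ) → Matrix 𝒳 𝒳 ℝ := agentKernel P (πs i t)
    have hQ : Q ∈ simplex (Fin N → 𝒳) := jointLaw_mem_simplex hP hμ0 hξ hπs t
    have hemp (X : Fin N → 𝒳) := empNbhd_mem_subProb hξ X i
    have joint_eq : (jointLaw P μ0 ξ πs (t + 1) ⬝ᵥ fun X => f (X i)) =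
        Q ⬝ᵥ fun X => A (empNbhd ξ X i) (X i) ⬝ᵥ f := by
      rw [jointLaw_succ]
      refine (dotProduct_mulVec _ _ _).symm.trans (congrArg (Q ⬝ᵥ ·) (funext fun X => ?_))
      exact prodLaw_dotProduct_apply
        (fun j => agentKernel_mem_simplex hP (hπs j t) (empNbhd_mem_subProb hξ X j) (X j)) i f
    have limit_bounded (x : 𝒳) : |(A (G t) *ᵥ f) x| ≤ M :=
      abs_dotProduct_le_of_mem_simplex (agentKernel_mem_simplex hP (hπs i t) (hG t) x) hf
    have kernel_error (X : Fin N → 𝒳) : |A (empNbhd ξ X i) (X i) ⬝ᵥ f - (A (G t) *ᵥ f) (X i)| ≤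
        M * LP * l1dist (empNbhd ξ X i) (G t) := by
      rw [mul_assoc]
      exact (abs_dotProduct_sub_le_mul_l1dist hf).trans <| mul_le_mul_of_nonneg_left
        (hPLip.l1dist_agentKernel_le (hπs i t) (hemp X) (hG t) (X i))
        ((abs_nonneg _).trans (hf (X i)))
    have step_error : |(Q ⬝ᵥ fun X => A (empNbhd ξ X i) (X i) ⬝ᵥ f) -
        Q ⬝ᵥ fun X => (A (G t) *ᵥ f) (X i)| ≤ M * LP * meanNbhdError Q ξ i (G t) := by
      rw [← dotProduct_sub, meanNbhdError, ← smul_eq_mul (M * LP), ← dotProduct_smul]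
      exact (abs_dotProduct_le_dotProduct_abs hQ.1 _).trans (dotProduct_mono hQ.1 kernel_error)
    rw [joint_eq, stateLaw_succ, ← dotProduct_mulVec, Finset.sum_range_succ, mul_add, add_comm]
    exact (abs_sub_le _ _ _).trans (add_le_add step_error (ih limit_bounded))

lemma abs_jointLaw_nbhd_sub_stateLaw_le (hP : IsKernel P) (hPLip : KernelLipschitz P LP)
    (hμ0 : μ0 ∈ simplex 𝒳) (hξ : ∀ i j, ξ i j ∈ Set.Icc (0 : ℝ) 1)
    (hπs : ∀ i, IsPolicy (πs i)) (hG : ∀ t, G t ∈ subProb 𝒳) (i : Fin N)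
    {h : 𝒳 → (𝒳 → ℝ) → ℝ} {M L C : ℝ} (hbdd : ∀ x, ∀ ν ∈ subProb 𝒳, |h x ν| ≤ M)
    (hLip : ∀ x, ∀ ν ∈ subProb 𝒳, ∀ ν' ∈ subProb 𝒳, |h x ν - h x ν'| ≤ L * l1dist ν ν')
    (hLC : L ≤ C) (hMC : M * LP ≤ C) (t : ℕ) :
    |(jointLaw P μ0 ξ πs t ⬝ᵥ fun X => h (X i) (empNbhd ξ X i)) -
        stateLaw P μ0 G (πs i) t ⬝ᵥ fun x => h x (G t)| ≤
      C * ∑ s ∈ Finset.range (t + 1), meanNbhdError (jointLaw P μ0 ξ πs s) ξ i (G s) := by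
  have hQ (s : ℕ) := jointLaw_mem_simplex hP hμ0 hξ hπs s
  have nbhd_error : |(jointLaw P μ0 ξ πs t ⬝ᵥ fun X => h (X i) (empNbhd ξ X i)) -
      jointLaw P μ0 ξ πs t ⬝ᵥ fun X => h (X i) (G t)| ≤
        C * meanNbhdError (jointLaw P μ0 ξ πs t) ξ i (G t) := by
    rw [← dotProduct_sub, meanNbhdError, ← smul_eq_mul C, ← dotProduct_smul]
    refine (abs_dotProduct_le_dotProduct_abs (hQ t).1 _).trans ?_
    refine dotProduct_mono (hQ t).1 fun X => ?_
    exact (hLip (X i) _ (empNbhd_mem_subProb hξ X i) _ (hG t)).trans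
      (mul_le_mul_of_nonneg_right hLC (l1dist_nonneg _ _))
  have state_error := abs_jointLaw_apply_sub_stateLaw_le hP hPLip hμ0 hξ hπs hG i t
    (f := fun x => h x (G t)) fun x => hbdd x (G t) (hG t)
  have accumulated_nonneg : 0 ≤
      ∑ s ∈ Finset.range t, meanNbhdError (jointLaw P μ0 ξ πs s) ξ i (G s) :=
    Finset.sum_nonneg fun s _ => meanNbhdError_nonneg (hQ s).1 i (G s)
  rw [Finset.sum_range_succ, mul_add, add_comm]
  exact (abs_sub_le _ _ _).trans <| add_le_add nbhd_error <|
    state_error.trans (mul_le_mul_of_nonneg_right hMC accumulated_nonneg)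

end Deviation

section DeviatingSystem

variable [Fintype 𝒳] [DecidableEq 𝒳] [Fintype 𝒰] {P : 𝒳 → 𝒰 → (𝒳 → ℝ) → 𝒳 → ℝ} {LP : ℝ}
  {μ0 : 𝒳 → ℝ} {N : ℕ} {ξ : Fin N → Fin N → ℝ} {πs : Fin N → ℕ → 𝒳 → 𝒰 → ℝ} {t : ℕ}
  {σ : Fin N → 𝒳 → 𝒰 → ℝ} {G : Fin N → 𝒳 → ℝ} {i : Fin N}

/-- The deviating agent `i` contributes at most `2 / N` to the average kernel mismatch. -/
lemma average_l1dist_agentKernel_le (hP : IsKernel P) (hPLip : KernelLipschitz P LP)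
    (hξ : ∀ j k, ξ j k ∈ Set.Icc (0 : ℝ) 1) (hπs : ∀ j, IsPolicy (πs j))
    (hσ : ∀ j x, σ j x ∈ simplex 𝒰) (hG : ∀ j, G j ∈ subProb 𝒳) (hπσ : ∀ j ≠ i, πs j t = σ j)
    (X : Fin N → 𝒳) :
    (N : ℝ)⁻¹ * ∑ j, l1dist (agentKernel P (πs j t) (empNbhd ξ X j) (X j))
        (agentKernel P (σ j) (G j) (X j)) ≤
      (N : ℝ)⁻¹ * (|LP| * ∑ j, l1dist (empNbhd ξ X j) (G j) + 2) := by
  have hemp (j : Fin N) := empNbhd_mem_subProb hξ X j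
  have each (j : Fin N) : l1dist (agentKernel P (πs j t) (empNbhd ξ X j) (X j))
      (agentKernel P (σ j) (G j) (X j)) ≤
        |LP| * l1dist (empNbhd ξ X j) (G j) + if j = i then 2 else 0 := by
    have lip_nonneg := mul_nonneg (abs_nonneg LP) (l1dist_nonneg (empNbhd ξ X j) (G j))
    rcases eq_or_ne j i with rfl | hji
    · rw [if_pos rfl]
      exact (l1dist_le_two (agentKernel_mem_simplex hP (hπs j t) (hemp j) _)
        (agentKernel_mem_simplex hP (hσ j) (hG j) _)).trans (le_add_of_nonneg_left lip_nonneg)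
    · rw [if_neg hji, add_zero, hπσ j hji]
      exact (hPLip.l1dist_agentKernel_le (hσ j) (hemp j) (hG j) _).trans
        (mul_le_mul_of_nonneg_right (le_abs_self LP) (l1dist_nonneg _ _))
  refine mul_le_mul_of_nonneg_left ((Finset.sum_le_sum fun j _ => each j).trans_eq ?_)
    (by positivity)
  rw [Finset.sum_add_distrib, ← Finset.mul_sum, Finset.sum_ite_eq' Finset.univ i,
    if_pos (Finset.mem_univ i)]

lemma ConcentratesAround.jointLaw_succ {m : Fin N → 𝒳 → ℝ} {K : ℝ}
    (hm : ConcentratesAround (jointLaw P μ0 ξ πs t) m K)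
    (hP : IsKernel P) (hPLip : KernelLipschitz P LP) (hμ0 : μ0 ∈ simplex 𝒳)
    (hξ : ∀ j k, ξ j k ∈ Set.Icc (0 : ℝ) 1) (hπs : ∀ j, IsPolicy (πs j))
    (hσ : ∀ j x, σ j x ∈ simplex 𝒰) (hG : ∀ j, G j ∈ subProb 𝒳)
    (hπσ : ∀ j ≠ i, πs j t = σ j) :
    ConcentratesAround (jointLaw P μ0 ξ πs (t + 1)) (fun j => m j ᵥ* agentKernel P (σ j) (G j))
      (1 / √N + (|LP| * (Fintype.card 𝒳 * K +
        (N : ℝ)⁻¹ * ∑ j, l1dist (marginalNbhd ξ m j) (G j)) + 2 / N) + K) := by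
  have hQ := jointLaw_mem_simplex hP hμ0 hξ hπs t
  have hN : (N : ℝ) ≠ 0 := Nat.cast_ne_zero.2 (Fin.pos i).ne'
  refine hm.step hQ
    (fun X j => agentKernel_mem_simplex hP (hπs j t) (empNbhd_mem_subProb hξ X j) (X j))
    (fun j => agentKernel_mem_simplex hP (hσ j) (hG j)) ?_
  calc _ ≤ jointLaw P μ0 ξ πs t ⬝ᵥ ((N : ℝ)⁻¹ •
          (|LP| • (∑ j, fun X => l1dist (empNbhd ξ X j) (G j)) + fun _ => 2)) :=
        dotProduct_mono hQ.1 fun X => by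
          simpa only [Pi.smul_apply, Pi.add_apply, Finset.sum_apply, smul_eq_mul] using
            average_l1dist_agentKernel_le hP hPLip hξ hπs hσ hG hπσ X
    _ = (N : ℝ)⁻¹ * (|LP| * ∑ j, meanNbhdError (jointLaw P μ0 ξ πs t) ξ j (G j) + 2) := by
        rw [dotProduct_smul, dotProduct_add, dotProduct_smul, dotProduct_sum,
          dotProduct_const_of_mem_simplex hQ, smul_eq_mul, smul_eq_mul]
        rfl
    _ ≤ (N : ℝ)⁻¹ * (|LP| * ∑ j, (Fintype.card 𝒳 * K + l1dist (marginalNbhd ξ m j) (G j)) + 2) := by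
        gcongr with j
        exact hm.meanNbhdError_le hQ hξ j (G j)
    _ = |LP| * (Fintype.card 𝒳 * K +
          (N : ℝ)⁻¹ * ∑ j, l1dist (marginalNbhd ξ m j) (G j)) + 2 / N := by
        rw [Finset.sum_add_distrib, Finset.sum_const, Finset.card_univ, Fintype.card_fin,
          nsmul_eq_mul]
        field_simp

end DeviatingSystem

section UnitInterval

variable {N : ℕ} {β : ℝ} {φ : ℝ → ℝ}

lemma integrableOn_unit_of_abs_le_one (hφ : Measurable φ)
    (hbdd : ∀ β ∈ Set.Icc (0 : ℝ) 1, |φ β| ≤ 1) : IntegrableOn φ (Set.Ioc 0 1) :=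
  Measure.integrableOn_of_bounded (M := 1) measure_Ioc_lt_top.ne hφ.aestronglyMeasurable <|
    (ae_restrict_mem measurableSet_Ioc).mono fun β hβ => hbdd β (Set.Ioc_subset_Icc_self hβ)

lemma abs_integral_unit_le_one (hbdd : ∀ β ∈ Set.Icc (0 : ℝ) 1, |φ β| ≤ 1) :
    |∫ β in Set.Ioc (0 : ℝ) 1, φ β| ≤ 1 := by
  have norm_le := norm_setIntegral_le_of_norm_le_const (μ := volume) (f := φ) (C := 1)
    measure_Ioc_lt_top fun β hβ => hbdd β (Set.Ioc_subset_Icc_self hβ)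
  simpa using norm_le

/-- The `k`-th interval `(k/N, (k+1)/N]` of the uniform partition of `(0, 1]`, the type interval of
agent `k`. -/
def cell (N : ℕ) (k : Fin N) : Set ℝ := Set.Ioc ((k : ℝ) / N) (((k : ℝ) + 1) / N)

/-- The right end point of the cell containing `β`, that is, `rep N k` for `β ∈ cell N k`. -/
noncomputable def gridPoint (N : ℕ) (β : ℝ) : ℝ := ⌈β * N⌉₊ / N

lemma mem_cell_iff {k : Fin N} : β ∈ cell N k ↔ ⌈β * N⌉₊ = k + 1 := by
  have hN : (0 : ℝ) < N := Nat.cast_pos.2 (Fin.pos k)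
  rw [Nat.ceil_eq_iff (Nat.succ_ne_zero _), cell, Set.mem_Ioc, div_lt_iff₀ hN, le_div_iff₀ hN,
    Nat.succ_sub_one, Nat.cast_succ]

lemma measurableSet_cell (k : Fin N) : MeasurableSet (cell N k) :=
  measurableSet_Ioc

lemma cell_unique {j k : Fin N} (hj : β ∈ cell N j) (hk : β ∈ cell N k) : j = k :=
  Fin.ext <| Nat.succ_injective <| (mem_cell_iff.1 hj).symm.trans (mem_cell_iff.1 hk)

lemma gridPoint_eq_rep {k : Fin N} (hβ : β ∈ cell N k) : gridPoint N β = rep N k := by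
  rw [gridPoint, mem_cell_iff.1 hβ, Nat.cast_succ, rep]

lemma gridPoint_mem_Icc (N : ℕ) (hβ : β ∈ Set.Icc (0 : ℝ) 1) : gridPoint N β ∈ Set.Icc 0 1 := by
  refine ⟨by unfold gridPoint; positivity, div_le_one_of_le₀ ?_ (Nat.cast_nonneg N)⟩
  exact Nat.cast_le.2 (Nat.ceil_le.2 (mul_le_of_le_one_left (Nat.cast_nonneg N) hβ.2))

lemma measurable_gridPoint (N : ℕ) : Measurable (gridPoint N) :=
  (measurable_from_nat.comp (Nat.measurable_ceil.comp (measurable_id.mul_const _))).div_const _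

lemma tendsto_gridPoint (hβ : 0 ≤ β) : Tendsto (fun N => gridPoint N β) atTop (nhds β) :=
  (tendsto_nat_ceil_mul_div_atTop hβ).comp tendsto_natCast_atTop_atTop

lemma rep_mem_Icc (k : Fin N) : rep N k ∈ Set.Icc (0 : ℝ) 1 := by
  have hN : (0 : ℝ) < N := Nat.cast_pos.2 (Fin.pos k)
  refine ⟨by unfold rep; positivity, (div_le_one hN).2 ?_⟩
  exact_mod_cast Nat.succ_le_of_lt k.isLt

lemma iUnion_cell (hN : N ≠ 0) : ⋃ k, cell N k = Set.Ioc 0 1 := by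
  have hN_pos : (0 : ℝ) < N := Nat.cast_pos.2 (Nat.pos_of_ne_zero hN)
  ext β
  simp only [Set.mem_iUnion]
  constructor
  · rintro ⟨k, hk⟩
    exact ⟨(by positivity : 0 ≤ (k : ℝ) / N).trans_lt hk.1, hk.2.trans (rep_mem_Icc k).2⟩
  · intro hβ
    have ceil_pos : 0 < ⌈β * N⌉₊ := Nat.ceil_pos.2 (mul_pos hβ.1 hN_pos)
    have ceil_le : ⌈β * N⌉₊ ≤ N := Nat.ceil_le.2 (mul_le_of_le_one_left hN_pos.le hβ.2)
    exact ⟨⟨⌈β * N⌉₊ - 1, by lia⟩, mem_cell_iff.2 (by simp only; lia)⟩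

lemma integral_unit_of_eqOn_cells (hN : N ≠ 0) {c : Fin N → ℝ}
    (hφ : ∀ k, ∀ β ∈ cell N k, φ β = c k) :
    ∫ β in Set.Ioc (0 : ℝ) 1, φ β = (N : ℝ)⁻¹ * ∑ k, c k := by
  have const_on_cell (k : Fin N) : ∫ β in cell N k, φ β = (N : ℝ)⁻¹ * c k := by
    rw [setIntegral_congr_fun (measurableSet_cell k) (hφ k), setIntegral_const, cell,
      Real.volume_real_Ioc_of_le (by gcongr; linarith), smul_eq_mul]
    ring
  rw [← iUnion_cell hN, integral_iUnion_fintype measurableSet_cell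
    (fun j k hjk => Set.disjoint_left.2 fun β hj hk => hjk (cell_unique hj hk))]
  · simp only [const_on_cell, Finset.mul_sum]
  · intro k
    exact (integrableOn_congr_fun (hφ k) (measurableSet_cell k)).2
      (integrableOn_const measure_Ioc_lt_top.ne)

lemma tendsto_integral_abs_comp_gridPoint_sub (hφ : Measurable φ)
    (hbdd : ∀ β ∈ Set.Icc (0 : ℝ) 1, |φ β| ≤ 1)
    (hcont : ∀ᵐ β ∂volume.restrict (Set.Ioc 0 1), ContinuousWithinAt φ (Set.Icc 0 1) β) :
    Tendsto (fun N => ∫ β in Set.Ioc (0 : ℝ) 1, |φ (gridPoint N β) - φ β|) atTop (nhds 0) := by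
  have limit := tendsto_integral_of_dominated_convergence (μ := volume.restrict (Set.Ioc (0 : ℝ) 1))
    (F := fun N β => |φ (gridPoint N β) - φ β|) (f := fun _ => 0) (fun _ => 2)
    (fun N => ((hφ.comp (measurable_gridPoint N)).sub hφ).abs.aestronglyMeasurable)
    (integrableOn_const measure_Ioc_lt_top.ne) (fun N => ?_) ?_
  · simpa only [integral_zero] using limit
  · filter_upwards [ae_restrict_mem measurableSet_Ioc] with β hβ
    have hβ := Set.Ioc_subset_Icc_self hβ
    rw [Real.norm_eq_abs, abs_abs, ← one_add_one_eq_two]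
    exact (abs_sub _ _).trans (add_le_add (hbdd _ (gridPoint_mem_Icc N hβ)) (hbdd β hβ))
  · filter_upwards [ae_restrict_mem measurableSet_Ioc, hcont] with β hβ hβcont
    have hβ := Set.Ioc_subset_Icc_self hβ
    have grid_tendsto : Tendsto (fun N => gridPoint N β) atTop (nhdsWithin β (Set.Icc 0 1)) :=
      tendsto_nhdsWithin_iff.2
        ⟨tendsto_gridPoint hβ.1, Eventually.of_forall fun N => gridPoint_mem_Icc N hβ⟩
    simpa using ((hβcont.tendsto.comp grid_tendsto).sub_const (φ β)).abs

end UnitInterval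

section GraphonOperator

variable {W : ℝ → ℝ → ℝ} {φ : ℝ → ℝ} {N : ℕ}

/-- A directed graphon: measurable and `[0, 1]`-valued, but not necessarily symmetric. -/
def IsDigraphon (W : ℝ → ℝ → ℝ) : Prop :=
  Measurable (Function.uncurry W) ∧ ∀ a b, W a b ∈ Set.Icc (0 : ℝ) 1

lemma IsGraphon.isDigraphon (hW : IsGraphon W) : IsDigraphon W :=
  ⟨hW.1, hW.2.2⟩

/-- The integral operator with kernel `W`, applied to `φ`. -/
noncomputable def graphonOp (W : ℝ → ℝ → ℝ) (φ : ℝ → ℝ) (α : ℝ) : ℝ :=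
  ∫ β in Set.Ioc (0 : ℝ) 1, W α β * φ β

lemma IsDigraphon.abs_mul_le (hW : IsDigraphon W) (α β z : ℝ) : |W α β * z| ≤ |z| := by
  rw [abs_mul, abs_of_nonneg (hW.2 α β).1]
  exact mul_le_of_le_one_left (abs_nonneg z) (hW.2 α β).2

lemma IsDigraphon.measurable_right (hW : IsDigraphon W) (α : ℝ) : Measurable (W α) :=
  hW.1.comp measurable_prodMk_left

lemma IsDigraphon.integrableOn_mul (hW : IsDigraphon W) (hφ : Measurable φ)
    (hbdd : ∀ β ∈ Set.Icc (0 : ℝ) 1, |φ β| ≤ 1) (α : ℝ) :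
    IntegrableOn (fun β => W α β * φ β) (Set.Ioc 0 1) :=
  integrableOn_unit_of_abs_le_one ((hW.measurable_right α).mul hφ) fun β hβ =>
    (hW.abs_mul_le α β (φ β)).trans (hbdd β hβ)

lemma IsDigraphon.abs_graphonOp_le_one (hW : IsDigraphon W)
    (hbdd : ∀ β ∈ Set.Icc (0 : ℝ) 1, |φ β| ≤ 1) (α : ℝ) : |graphonOp W φ α| ≤ 1 :=
  abs_integral_unit_le_one fun β hβ => (hW.abs_mul_le α β (φ β)).trans (hbdd β hβ)

lemma IsDigraphon.measurable_graphonOp (hW : IsDigraphon W) (hφ : Measurable φ) :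
    Measurable (graphonOp W φ) :=
  (hW.1.mul (hφ.comp measurable_snd)).stronglyMeasurable.integral_prod_right.measurable

lemma IsDigraphon.integrableOn_graphonOp (hW : IsDigraphon W) (hφ : Measurable φ)
    (hbdd : ∀ β ∈ Set.Icc (0 : ℝ) 1, |φ β| ≤ 1) : IntegrableOn (graphonOp W φ) (Set.Ioc 0 1) :=
  integrableOn_unit_of_abs_le_one (hW.measurable_graphonOp hφ) fun α _ =>
    hW.abs_graphonOp_le_one hbdd α

lemma IsDigraphon.continuousWithinAt_graphonOp (hW : IsDigraphon W) (hφ : Measurable φ)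
    (hbdd : ∀ β ∈ Set.Icc (0 : ℝ) 1, |φ β| ≤ 1) {S : Set ℝ} {α : ℝ}
    (hWcont : ∀ᵐ β ∂volume.restrict (Set.Ioc 0 1), ContinuousWithinAt (fun a => W a β) S α) :
    ContinuousWithinAt (graphonOp W φ) S α := by
  refine continuousWithinAt_of_dominated (bound := fun _ => 1)
    (.of_forall fun a => ((hW.measurable_right a).mul hφ).aestronglyMeasurable)
    (.of_forall fun a => ?_) (integrableOn_const measure_Ioc_lt_top.ne)
    (hWcont.mono fun β hβ => hβ.mul continuousWithinAt_const)
  filter_upwards [ae_restrict_mem measurableSet_Ioc] with β hβ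
  exact (hW.abs_mul_le a β (φ β)).trans (hbdd β (Set.Ioc_subset_Icc_self hβ))

lemma IsDigraphon.abs_graphonOp_sub_le_integral (hW : IsDigraphon W) {ψ : ℝ → ℝ} (hφ : Measurable φ)
    (hφ_bdd : ∀ β ∈ Set.Icc (0 : ℝ) 1, |φ β| ≤ 1) (hψ : Measurable ψ)
    (hψ_bdd : ∀ β ∈ Set.Icc (0 : ℝ) 1, |ψ β| ≤ 1) (α : ℝ) :
    |graphonOp W ψ α - graphonOp W φ α| ≤ ∫ β in Set.Ioc (0 : ℝ) 1, |ψ β - φ β| := by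
  have difference_integrable := (integrableOn_unit_of_abs_le_one hψ hψ_bdd).sub
    (integrableOn_unit_of_abs_le_one hφ hφ_bdd)
  rw [graphonOp, graphonOp, ← integral_sub (hW.integrableOn_mul hψ hψ_bdd α)
    (hW.integrableOn_mul hφ hφ_bdd α)]
  refine abs_integral_le_integral_abs.trans (integral_mono_of_nonneg
    (.of_forall fun β => abs_nonneg _) difference_integrable.abs (.of_forall fun β => ?_))
  simp only [← mul_sub]
  exact hW.abs_mul_le α β (ψ β - φ β)

lemma IsDigraphon.abs_graphonOp_sub_graphonOp_le (hW : IsDigraphon W) (V : ℝ → ℝ → ℝ) {ψ : ℝ → ℝ}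
    (hφ : Measurable φ) (hφ_bdd : ∀ β ∈ Set.Icc (0 : ℝ) 1, |φ β| ≤ 1) (hψ : Measurable ψ)
    (hψ_bdd : ∀ β ∈ Set.Icc (0 : ℝ) 1, |ψ β| ≤ 1) (α α' : ℝ) :
    |graphonOp V ψ α - graphonOp W φ α'| ≤ |graphonOp V ψ α - graphonOp W ψ α| +
      (∫ β in Set.Ioc (0 : ℝ) 1, |ψ β - φ β|) + |graphonOp W φ α' - graphonOp W φ α| := by
  rw [abs_sub_comm (graphonOp W φ α')]
  refine (abs_sub_le _ (graphonOp W φ α) _).trans (add_le_add_left ?_ _)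
  exact (abs_sub_le _ (graphonOp W ψ α) _).trans
    (add_le_add_right (hW.abs_graphonOp_sub_le_integral hφ hφ_bdd hψ hψ_bdd α) _)

variable {ξ : Fin N → Fin N → ℝ}

lemma stepGraphon_of_mem_cell (ξ : Fin N → Fin N → ℝ) {α β : ℝ} {j k : Fin N}
    (hα : α ∈ cell N j) (hβ : β ∈ cell N k) : stepGraphon ξ α β = ξ j k := by
  have mem_iff {γ : ℝ} {l : Fin N} (hγ : γ ∈ cell N l) (i : Fin N) :
      ((i : ℝ) / N < γ ∧ γ ≤ ((i : ℝ) + 1) / N) ↔ i = l :=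
    ⟨fun h => cell_unique h hγ, fun h => h ▸ hγ⟩
  simp [stepGraphon, mem_iff hα, mem_iff hβ]

lemma measurable_stepGraphon (ξ : Fin N → Fin N → ℝ) :
    Measurable (Function.uncurry (stepGraphon ξ)) := by
  unfold stepGraphon Function.uncurry
  refine Finset.measurable_fun_sum _ fun i _ => Finset.measurable_fun_sum _ fun j _ =>
    .mul_const (.mul ?_ ?_) _
  · exact .ite (measurable_fst (measurableSet_cell i)) measurable_const measurable_const
  · exact .ite (measurable_snd (measurableSet_cell j)) measurable_const measurable_const

lemma isDigraphon_stepGraphon (hξ : ∀ i j, ξ i j ∈ Set.Icc (0 : ℝ) 1) :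
    IsDigraphon (stepGraphon ξ) := by
  refine ⟨measurable_stepGraphon ξ, fun α β => ?_⟩
  by_cases h : (∃ j, α ∈ cell N j) ∧ ∃ k, β ∈ cell N k
  · obtain ⟨⟨j, hα⟩, k, hβ⟩ := h
    exact stepGraphon_of_mem_cell ξ hα hβ ▸ hξ j k
  · have vanishes : stepGraphon ξ α β = 0 :=
      Finset.sum_eq_zero fun j _ => Finset.sum_eq_zero fun k _ => by
        rcases not_and_or.1 h with hα | hβ
        · rw [if_neg (show ¬(_ ∧ _) from fun hj => hα ⟨j, hj⟩), zero_mul, zero_mul]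
        · rw [if_neg (c := _ ∧ β ≤ _) fun hk => hβ ⟨k, hk⟩, mul_zero, zero_mul]
    rw [vanishes]
    exact ⟨le_rfl, zero_le_one⟩

lemma graphonOp_stepGraphon_comp_gridPoint (ξ : Fin N → Fin N → ℝ) (φ : ℝ → ℝ) {α : ℝ} {j : Fin N}
    (hα : α ∈ cell N j) :
    graphonOp (stepGraphon ξ) (fun β => φ (gridPoint N β)) α =
      (N : ℝ)⁻¹ * ∑ k, ξ j k * φ (rep N k) :=
  integral_unit_of_eqOn_cells (Fin.pos j).ne' fun k β hβ => by
    simp only [stepGraphon_of_mem_cell ξ hα hβ, gridPoint_eq_rep hβ]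

/-- `OpConvergesTo` quantifies over test functions bounded on the whole line; here a bound on the
unit interval is enough, by cutting the test functions off outside it. -/
lemma OpConvergesTo.tendsto_integral_abs_graphonOp_sub {WN : ℕ → ℝ → ℝ → ℝ}
    (hWN_conv : OpConvergesTo WN W) (hWN : ∀ N, IsDigraphon (WN N)) (hW : IsDigraphon W)
    {φ : ℕ → ℝ → ℝ} (hφ : ∀ N, Measurable (φ N))
    (hbdd : ∀ N, ∀ β ∈ Set.Icc (0 : ℝ) 1, |φ N β| ≤ 1) :
    Tendsto (fun N => ∫ α in Set.Ioc (0 : ℝ) 1, |graphonOp (WN N) (φ N) α - graphonOp W (φ N) α|)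
      atTop (nhds 0) := by
  let cutoff (N : ℕ) : ℝ → ℝ := (Set.Ioc 0 1).indicator (φ N)
  have cutoff_bdd (N : ℕ) (β : ℝ) : |cutoff N β| ≤ 1 := by
    by_cases hβ : β ∈ Set.Ioc (0 : ℝ) 1
    · simpa only [cutoff, Set.indicator_of_mem hβ] using hbdd N β (Set.Ioc_subset_Icc_self hβ)
    · simp only [cutoff, Set.indicator_of_notMem hβ, abs_zero, zero_le_one]
  have sub_eq (N : ℕ) (α : ℝ) : graphonOp (WN N) (φ N) α - graphonOp W (φ N) α =
      ∫ β in Set.Ioc (0 : ℝ) 1, (WN N α β - W α β) * cutoff N β := by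
    rw [graphonOp, graphonOp, ← integral_sub ((hWN N).integrableOn_mul (hφ N) (hbdd N) α)
      (hW.integrableOn_mul (hφ N) (hbdd N) α)]
    exact setIntegral_congr_fun measurableSet_Ioc fun β hβ => by
      simp only [cutoff, Set.indicator_of_mem hβ, sub_mul]
  refine tendsto_order.2 ⟨fun a ha => .of_forall fun N => ?_, fun ε hε => ?_⟩
  · exact ha.trans_le (integral_nonneg fun α => abs_nonneg _)
  · obtain ⟨N₀, hN₀⟩ := hWN_conv (ε / 2) (half_pos hε)
    filter_upwards [eventually_ge_atTop N₀] with N hN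
    simp only [sub_eq]
    exact (hN₀ N hN _ ((hφ N).indicator measurableSet_Ioc) (cutoff_bdd N)).trans_lt
      (half_lt_self hε)

lemma average_abs_sub_graphonOp_le (hW : IsDigraphon W) (hξ : ∀ i j, ξ i j ∈ Set.Icc (0 : ℝ) 1)
    (hφ : Measurable φ) (hbdd : ∀ β ∈ Set.Icc (0 : ℝ) 1, |φ β| ≤ 1) (hN : N ≠ 0) :
    (N : ℝ)⁻¹ * ∑ j, |(N : ℝ)⁻¹ * ∑ k, ξ j k * φ (rep N k) - graphonOp W φ (rep N j)| ≤
      (∫ α in Set.Ioc (0 : ℝ) 1, |graphonOp (stepGraphon ξ) (fun β => φ (gridPoint N β)) α -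
        graphonOp W (fun β => φ (gridPoint N β)) α|) +
      (∫ β in Set.Ioc (0 : ℝ) 1, |φ (gridPoint N β) - φ β|) +
      ∫ α in Set.Ioc (0 : ℝ) 1, |graphonOp W φ (gridPoint N α) - graphonOp W φ α| := by
  set ψ : ℝ → ℝ := fun β => φ (gridPoint N β)
  have hψ : Measurable ψ := hφ.comp (measurable_gridPoint N)
  have hψ_bdd : ∀ β ∈ Set.Icc (0 : ℝ) 1, |ψ β| ≤ 1 := fun β hβ => hbdd _ (gridPoint_mem_Icc N hβ)
  have hstep := isDigraphon_stepGraphon hξ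
  have average_eq : ∫ α in Set.Ioc (0 : ℝ) 1,
      |graphonOp (stepGraphon ξ) ψ α - graphonOp W φ (gridPoint N α)| =
        (N : ℝ)⁻¹ * ∑ j, |(N : ℝ)⁻¹ * ∑ k, ξ j k * φ (rep N k) - graphonOp W φ (rep N j)| :=
    integral_unit_of_eqOn_cells hN fun j α hα => by
      simp only [ψ, graphonOp_stepGraphon_comp_gridPoint ξ φ hα, gridPoint_eq_rep hα]
  have kernel_integrable := ((hstep.integrableOn_graphonOp hψ hψ_bdd).sub
    (hW.integrableOn_graphonOp hψ hψ_bdd)).abs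
  have input_integrable : IntegrableOn (fun _ => ∫ β in Set.Ioc (0 : ℝ) 1, |ψ β - φ β|)
    (Set.Ioc (0 : ℝ) 1) := integrableOn_const measure_Ioc_lt_top.ne
  have output_integrable := ((integrableOn_unit_of_abs_le_one
    ((hW.measurable_graphonOp hφ).comp (measurable_gridPoint N))
    fun α _ => hW.abs_graphonOp_le_one hbdd _).sub (hW.integrableOn_graphonOp hφ hbdd)).abs
  rw [← average_eq]
  refine (integral_mono_of_nonneg (.of_forall fun α => abs_nonneg _)
    ((kernel_integrable.add input_integrable).add output_integrable)
    (.of_forall fun α => hW.abs_graphonOp_sub_graphonOp_le _ hφ hbdd hψ hψ_bdd α _)).trans_eq ?_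
  refine (integral_add (kernel_integrable.add input_integrable) output_integrable).trans
    (congrArg (· + _) ?_)
  refine (integral_add kernel_integrable input_integrable).trans (congrArg (_ + ·) ?_)
  simp only [integral_const, measureReal_restrict_apply_univ, Real.volume_real_Ioc, sub_zero,
    zero_le_one, sup_of_le_left, one_smul]
  rfl

lemma tendsto_average_abs_sub_graphonOp {ξ : (N : ℕ) → Fin N → Fin N → ℝ} (hW : IsDigraphon W)
    (hξ : ∀ N i j, ξ N i j ∈ Set.Icc (0 : ℝ) 1)
    (hWN : OpConvergesTo (fun N => stepGraphon (ξ N)) W)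
    (hWcont : ∀ᵐ α ∂volume.restrict (Set.Ioc 0 1), ∀ᵐ β ∂volume.restrict (Set.Ioc 0 1),
      ContinuousWithinAt (fun a => W a β) (Set.Icc 0 1) α)
    (hφ : Measurable φ) (hbdd : ∀ β ∈ Set.Icc (0 : ℝ) 1, |φ β| ≤ 1)
    (hcont : ∀ᵐ β ∂volume.restrict (Set.Ioc 0 1), ContinuousWithinAt φ (Set.Icc 0 1) β) :
    Tendsto (fun N : ℕ => (N : ℝ)⁻¹ * ∑ j, |(N : ℝ)⁻¹ * ∑ k, ξ N j k * φ (rep N k) -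
      graphonOp W φ (rep N j)|) atTop (nhds 0) := by
  have kernel_tendsto := hWN.tendsto_integral_abs_graphonOp_sub
    (fun N => isDigraphon_stepGraphon (hξ N)) hW (fun N => hφ.comp (measurable_gridPoint N))
    fun N β hβ => hbdd _ (gridPoint_mem_Icc N hβ)
  have input_tendsto := tendsto_integral_abs_comp_gridPoint_sub hφ hbdd hcont
  have output_tendsto := tendsto_integral_abs_comp_gridPoint_sub (hW.measurable_graphonOp hφ)
    (fun α _ => hW.abs_graphonOp_le_one hbdd α)
    (hWcont.mono fun α hα => hW.continuousWithinAt_graphonOp hφ hbdd hα)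
  have bound_tendsto := (kernel_tendsto.add input_tendsto).add output_tendsto
  simp only [add_zero] at bound_tendsto
  refine squeeze_zero' (.of_forall fun N => by positivity) ?_ bound_tendsto
  filter_upwards [eventually_ne_atTop 0] with N hN
  exact average_abs_sub_graphonOp_le hW (hξ N) hφ hbdd hN

end GraphonOperator

section MeanField

variable [Fintype 𝒳] {W : ℝ → ℝ → ℝ} {ν : ℝ → 𝒳 → ℝ}

lemma nbhd_mem_subProb (hW : IsDigraphon W) (hν_meas : ∀ x, Measurable fun β => ν β x)
    (hν : ∀ β ∈ Set.Icc (0 : ℝ) 1, ν β ∈ simplex 𝒳) (α : ℝ) : nbhd W ν α ∈ subProb 𝒳 := by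
  refine ⟨fun x => setIntegral_nonneg measurableSet_Ioc fun β hβ =>
    mul_nonneg (hW.2 α β).1 ((hν β (Set.Ioc_subset_Icc_self hβ)).1 x), ?_⟩
  have integrable (x : 𝒳) := hW.integrableOn_mul (hν_meas x)
    (fun β hβ => abs_apply_le_one_of_mem_simplex (hν β hβ) x) α
  calc ∑ x, nbhd W ν α x = ∫ β in Set.Ioc (0 : ℝ) 1, ∑ x, W α β * ν β x :=
        (integral_finsetSum _ fun x _ => integrable x).symm
    _ ≤ 1 := (le_abs_self _).trans <| abs_integral_unit_le_one fun β hβ => by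
        rw [← Finset.mul_sum, (hν β hβ).2]
        exact (hW.abs_mul_le α β 1).trans_eq abs_one

lemma continuousWithinAt_nbhd (hW : IsDigraphon W) (hν_meas : ∀ x, Measurable fun β => ν β x)
    (hν : ∀ β ∈ Set.Icc (0 : ℝ) 1, ν β ∈ simplex 𝒳) {S : Set ℝ} {α : ℝ}
    (hWcont : ∀ᵐ β ∂volume.restrict (Set.Ioc 0 1), ContinuousWithinAt (fun a => W a β) S α) :
    ContinuousWithinAt (nbhd W ν) S α :=
  continuousWithinAt_pi.2 fun x => hW.continuousWithinAt_graphonOp (hν_meas x)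
    (fun β hβ => abs_apply_le_one_of_mem_simplex (hν β hβ) x) hWcont

variable [Fintype 𝒰] {P : 𝒳 → 𝒰 → (𝒳 → ℝ) → 𝒳 → ℝ} {LP : ℝ} {μ0 : 𝒳 → ℝ}
  {πe : ℝ → ℕ → 𝒳 → 𝒰 → ℝ} {μ : ℕ → ℝ → 𝒳 → ℝ}

lemma KernelLipschitz.continuousOn (hPLip : KernelLipschitz P LP) (x : 𝒳) (u : 𝒰) :
    ContinuousOn (P x u) (subProb 𝒳) := by
  refine fun ν hν => continuousWithinAt_pi.2 fun y => tendsto_iff_dist_tendsto_zero.2 ?_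
  have bound_continuous : Continuous fun ν' => LP * l1dist ν' ν := by
    unfold l1dist
    fun_prop
  have bound_tendsto := (bound_continuous.tendsto ν).mono_left
    (nhdsWithin_le_nhds (s := subProb 𝒳))
  simp only [l1dist, sub_self, abs_zero, Finset.sum_const_zero, mul_zero] at bound_tendsto
  refine squeeze_zero' (.of_forall fun _ => dist_nonneg) ?_ bound_tendsto
  filter_upwards [self_mem_nhdsWithin] with ν' hν'
  exact (Finset.single_le_sum (f := fun y => |P x u ν' y - P x u ν y|)
    (fun _ _ => abs_nonneg _) (Finset.mem_univ y)).trans (hPLip x u ν' ν hν' hν)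

lemma IsMeanFieldOf.mem_simplex (hμ : IsMeanFieldOf W P μ0 πe μ) (hW : IsDigraphon W)
    (hP : IsKernel P) (hμ0 : μ0 ∈ simplex 𝒳) (hπe : ∀ α ∈ Set.Icc (0 : ℝ) 1, IsPolicy (πe α))
    (t : ℕ) : ∀ α ∈ Set.Icc (0 : ℝ) 1, μ t α ∈ simplex 𝒳 := by
  induction t with
  | zero => exact fun α hα => hμ.2.1 α hα ▸ hμ0
  | succ t ih =>
    intro α hα
    rw [hμ.succ t hα]
    exact vecMul_mem_simplex (ih α hα)
      (agentKernel_mem_simplex hP (hπe α hα t) (nbhd_mem_subProb hW (hμ.1 t) ih α))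

lemma IsMeanFieldOf.continuousWithinAt (hμ : IsMeanFieldOf W P μ0 πe μ) (hW : IsDigraphon W)
    (hP : IsKernel P) (hPLip : KernelLipschitz P LP) (hμ0 : μ0 ∈ simplex 𝒳)
    (hπe : ∀ α ∈ Set.Icc (0 : ℝ) 1, IsPolicy (πe α)) {α : ℝ} (hα : α ∈ Set.Icc 0 1)
    (hWcont : ∀ᵐ β ∂volume.restrict (Set.Ioc 0 1),
      ContinuousWithinAt (fun a => W a β) (Set.Icc 0 1) α)
    (hπcont : ContinuousWithinAt πe (Set.Icc 0 1) α) (t : ℕ) :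
    ContinuousWithinAt (μ t) (Set.Icc 0 1) α := by
  induction t with
  | zero => exact continuousWithinAt_const.congr (fun a ha => hμ.2.1 a ha) (hμ.2.1 α hα)
  | succ t ih =>
    have hν := hμ.mem_simplex hW hP hμ0 hπe t
    have policy_cont (x : 𝒳) (u : 𝒰) :
        ContinuousWithinAt (fun a => πe a t x u) (Set.Icc 0 1) α := by
      simp only [continuousWithinAt_pi] at hπcont
      exact hπcont t x u
    have transition_cont (x : 𝒳) (u : 𝒰) :
        ContinuousWithinAt (fun a => P x u (nbhd W (μ t) a)) (Set.Icc 0 1) α :=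
      (hPLip.continuousOn x u _ (nbhd_mem_subProb hW (hμ.1 t) hν α)).comp
        (continuousWithinAt_nbhd hW (hμ.1 t) hν hWcont)
        fun a _ => nbhd_mem_subProb hW (hμ.1 t) hν a
    refine continuousWithinAt_pi.2 fun y => ContinuousWithinAt.congr ?_
      (fun a ha => hμ.2.2 t a ha y) (hμ.2.2 t α hα y)
    exact tendsto_finsetSum _ fun x _ => (continuousWithinAt_pi.1 ih x).mul <|
      tendsto_finsetSum _ fun u _ => (policy_cont x u).mul
        (continuousWithinAt_pi.1 (transition_cont x u) y)

variable {N : ℕ}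

/-- The `L¹` distance between the neighborhood mean field of agent `j` in the finite graph and the
one in the graphon limit, when every agent has its limiting law. -/
noncomputable def nbhdGap (ξ : Fin N → Fin N → ℝ) (W : ℝ → ℝ → ℝ) (ν : ℝ → 𝒳 → ℝ) (j : Fin N) : ℝ :=
  l1dist (marginalNbhd ξ (fun k => ν (rep N k)) j) (nbhd W ν (rep N j))

lemma tendsto_average_nbhdGap {ξ : (N : ℕ) → Fin N → Fin N → ℝ} (hW : IsDigraphon W)
    (hξ : ∀ N i j, ξ N i j ∈ Set.Icc (0 : ℝ) 1)
    (hWN : OpConvergesTo (fun N => stepGraphon (ξ N)) W)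
    (hWcont : ∀ᵐ α ∂volume.restrict (Set.Ioc 0 1), ∀ᵐ β ∂volume.restrict (Set.Ioc 0 1),
      ContinuousWithinAt (fun a => W a β) (Set.Icc 0 1) α)
    (hν_meas : ∀ x, Measurable fun β => ν β x)
    (hν : ∀ β ∈ Set.Icc (0 : ℝ) 1, ν β ∈ simplex 𝒳)
    (hν_cont : ∀ᵐ β ∂volume.restrict (Set.Ioc 0 1), ContinuousWithinAt ν (Set.Icc 0 1) β) :
    Tendsto (fun N : ℕ => (N : ℝ)⁻¹ * ∑ j, nbhdGap (ξ N) W ν j) atTop (nhds 0) := by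
  have each_state := tendsto_finsetSum Finset.univ fun x _ =>
    tendsto_average_abs_sub_graphonOp hW hξ hWN hWcont (hν_meas x)
      (fun β hβ => abs_apply_le_one_of_mem_simplex (hν β hβ) x)
      (hν_cont.mono fun β hβ => continuousWithinAt_pi.1 hβ x)
  rw [Finset.sum_const_zero] at each_state
  refine each_state.congr fun N => ?_
  rw [← Finset.mul_sum, Finset.sum_comm]
  rfl

end MeanField

section LargeAgentSets

lemma one_sub_mul_card_le_card_filter_le {ι : Type*} [Fintype ι] {d : ι → ℝ} (hd : 0 ≤ d)
    {p δ : ℝ} (hδ : 0 < δ) (hsum : ∑ i, d i ≤ p * δ * Fintype.card ι) :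
    (1 - p) * Fintype.card ι ≤ (Finset.univ.filter (d · ≤ δ)).card := by
  let bad := Finset.univ.filter (¬ d · ≤ δ)
  have markov : bad.card * δ ≤ ∑ i, d i :=
    calc bad.card * δ = ∑ _i ∈ bad, δ := by rw [Finset.sum_const, nsmul_eq_mul]
      _ ≤ ∑ i ∈ bad, d i :=
        Finset.sum_le_sum fun _ hi => (not_le.1 (Finset.mem_filter.1 hi).2).le
      _ ≤ ∑ i, d i :=
        Finset.sum_le_sum_of_subset_of_nonneg (Finset.filter_subset _ _) fun _ _ _ => hd _
  have few_bad : (bad.card : ℝ) ≤ p * Fintype.card ι := le_of_mul_le_mul_right (by linarith) hδ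
  have partition : ((Finset.univ.filter (d · ≤ δ)).card : ℝ) + bad.card = Fintype.card ι :=
    mod_cast Finset.card_filter_add_card_filter_not (s := Finset.univ) (d · ≤ δ)
  linarith

lemma eventually_exists_floor_le_card {d : (N : ℕ) → Fin N → ℝ} (hd : ∀ N, 0 ≤ d N)
    (havg : Tendsto (fun N : ℕ => (N : ℝ)⁻¹ * ∑ i, d N i) atTop (nhds 0)) {p δ : ℝ} (hp : 0 < p)
    (hδ : 0 < δ) :
    ∀ᶠ N : ℕ in atTop, ∃ S : Finset (Fin N),
      ⌊(1 - p) * (N : ℝ)⌋ ≤ (S.card : ℤ) ∧ ∀ i ∈ S, d N i ≤ δ := by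
  filter_upwards [havg.eventually_le_const (mul_pos hp hδ), eventually_gt_atTop 0] with N hN N_pos
  have sum_le : ∑ i, d N i ≤ p * δ * N := by
    rwa [inv_mul_le_iff₀ (Nat.cast_pos.2 N_pos), mul_comm] at hN
  have card_ge := one_sub_mul_card_le_card_filter_le (hd N) hδ
    (sum_le.trans_eq (by rw [Fintype.card_fin]))
  rw [Fintype.card_fin] at card_ge
  exact ⟨_, Int.cast_le.1 ((Int.floor_le _).trans card_ge), fun i hi => (Finset.mem_filter.1 hi).2⟩

end LargeAgentSets

section Convergence

variable [Fintype 𝒰] {πe : ℝ → ℕ → 𝒳 → 𝒰 → ℝ}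

lemma isPolicy_update_gammaN (hπe : ∀ α ∈ Set.Icc (0 : ℝ) 1, IsPolicy (πe α)) {N : ℕ} (i : Fin N)
    {πd : ℕ → 𝒳 → 𝒰 → ℝ} (hπd : IsPolicy πd) (j : Fin N) :
    IsPolicy (Function.update (gammaN πe N) i πd j) := by
  rcases eq_or_ne j i with rfl | hji
  · rwa [Function.update_self]
  · rw [Function.update_of_ne hji]
    exact hπe _ (rep_mem_Icc j)

variable [Fintype 𝒳] [DecidableEq 𝒳] {P : 𝒳 → 𝒰 → (𝒳 → ℝ) → 𝒳 → ℝ} {LP : ℝ}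
  {μ0 : 𝒳 → ℝ} {W : ℝ → ℝ → ℝ} {ξ : (N : ℕ) → Fin N → Fin N → ℝ} {μ : ℕ → ℝ → 𝒳 → ℝ}

lemma exists_tendsto_concentratesAround (hP : IsKernel P) (hPLip : KernelLipschitz P LP)
    (hμ0 : μ0 ∈ simplex 𝒳) (hW : IsDigraphon W) (hξ : ∀ N i j, ξ N i j ∈ Set.Icc (0 : ℝ) 1)
    (hπe : ∀ α ∈ Set.Icc (0 : ℝ) 1, IsPolicy (πe α)) (hμ : IsMeanFieldOf W P μ0 πe μ)
    (hgap : ∀ t, Tendsto (fun N : ℕ => (N : ℝ)⁻¹ * ∑ j, nbhdGap (ξ N) W (μ t) j) atTop (nhds 0))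
    (t : ℕ) :
    ∃ K : ℕ → ℝ, Tendsto K atTop (nhds 0) ∧ ∀ (N : ℕ) (i : Fin N) (πd : ℕ → 𝒳 → 𝒰 → ℝ),
      IsPolicy πd → ConcentratesAround
        (jointLaw P μ0 (ξ N) (Function.update (gammaN πe N) i πd) t)
        (fun j => μ t (rep N j)) (K N) := by
  have noise_tendsto : Tendsto (fun N : ℕ => 1 / √(N : ℝ)) atTop (nhds 0) := by
    simpa only [one_div, Function.comp_def] using
      tendsto_inv_atTop_zero.comp (Real.tendsto_sqrt_atTop.comp tendsto_natCast_atTop_atTop)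
  induction t with
  | zero =>
    refine ⟨_, noise_tendsto, fun N i πd _ => ?_⟩
    simp only [hμ.2.1 _ (rep_mem_Icc _)]
    exact concentratesAround_prodLaw fun _ => hμ0
  | succ t ih =>
    obtain ⟨K, hK, hconc⟩ := ih
    have hν := hμ.mem_simplex hW hP hμ0 hπe t
    have drift_tendsto := ((((hK.const_mul (Fintype.card 𝒳 : ℝ)).add (hgap t)).const_mul |LP|).add
      (tendsto_const_div_atTop_nhds_zero_nat 2))
    have bound_tendsto := (noise_tendsto.add drift_tendsto).add hK
    simp only [mul_zero, add_zero] at bound_tendsto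
    refine ⟨_, bound_tendsto, fun N i πd hπd => ?_⟩
    simp only [hμ.succ t (rep_mem_Icc _)]
    exact (hconc N i πd hπd).jointLaw_succ hP hPLip hμ0 (hξ N) (isPolicy_update_gammaN hπe i hπd)
      (fun j => hπe _ (rep_mem_Icc j) t) (fun j => nbhd_mem_subProb hW (hμ.1 t) hν _)
      fun j hji => congrFun (Function.update_of_ne hji _ _) t

lemma eventually_exists_sum_meanNbhdError_lt (hP : IsKernel P) (hPLip : KernelLipschitz P LP)
    (hμ0 : μ0 ∈ simplex 𝒳) (hW : IsDigraphon W) (hξ : ∀ N i j, ξ N i j ∈ Set.Icc (0 : ℝ) 1)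
    (hπe : ∀ α ∈ Set.Icc (0 : ℝ) 1, IsPolicy (πe α)) (hμ : IsMeanFieldOf W P μ0 πe μ)
    (hgap : ∀ t, Tendsto (fun N : ℕ => (N : ℝ)⁻¹ * ∑ j, nbhdGap (ξ N) W (μ t) j) atTop (nhds 0))
    (S : Finset ℕ) {p δ : ℝ} (hp : 0 < p) (hδ : 0 < δ) :
    ∀ᶠ N : ℕ in atTop, ∃ Wset : Finset (Fin N), ⌊(1 - p) * (N : ℝ)⌋ ≤ (Wset.card : ℤ) ∧
      ∀ i ∈ Wset, ∀ πd : ℕ → 𝒳 → 𝒰 → ℝ, IsPolicy πd → ∑ s ∈ S,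
        meanNbhdError (jointLaw P μ0 (ξ N) (Function.update (gammaN πe N) i πd) s) (ξ N) i
          (nbhd W (μ s) (rep N i)) < δ := by
  choose K hK hconc using exists_tendsto_concentratesAround hP hPLip hμ0 hW hξ hπe hμ hgap
  have fluctuation_tendsto := tendsto_finsetSum S fun s _ =>
    (hK s).const_mul (Fintype.card 𝒳 : ℝ)
  have total_gap_tendsto := tendsto_finsetSum S fun s _ => hgap s
  simp only [mul_zero, Finset.sum_const_zero] at fluctuation_tendsto total_gap_tendsto
  have large_set := eventually_exists_floor_le_card
    (d := fun N i => ∑ s ∈ S, nbhdGap (ξ N) W (μ s) i)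
    (fun N i => Finset.sum_nonneg fun s _ => l1dist_nonneg _ _)
    (total_gap_tendsto.congr fun N => by rw [← Finset.mul_sum, Finset.sum_comm]) hp (half_pos hδ)
  filter_upwards [fluctuation_tendsto.eventually_lt_const (half_pos hδ), large_set]
    with N fluctuation_lt ⟨Wset, card_ge, gap_le⟩
  refine ⟨Wset, card_ge, fun i hi πd hπd => ?_⟩
  have error_le (s : ℕ) := (hconc s N i πd hπd).meanNbhdError_le
    (jointLaw_mem_simplex hP hμ0 (hξ N) (isPolicy_update_gammaN hπe i hπd) s) (hξ N) i
    (nbhd W (μ s) (rep N i))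
  refine (Finset.sum_le_sum fun s _ => error_le s).trans_lt ?_
  rw [Finset.sum_add_distrib, ← add_halves δ]
  exact add_lt_add_of_lt_of_le fluctuation_lt (gap_le i hi)

end Convergence

section Regularity

lemma GraphonLipschitz.continuousWithinAt {W : ℝ → ℝ → ℝ} {L : ℝ} (hWLip : GraphonLipschitz W L)
    {α β : ℝ} (hα : α ∈ Set.Icc 0 1) (hβ : β ∈ Set.Icc 0 1) :
    ContinuousWithinAt (fun a => W a β) (Set.Icc 0 1) α := by
  have lipschitz : LipschitzOnWith L.toNNReal (fun a => W a β) (Set.Icc 0 1) :=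
    LipschitzOnWith.of_dist_le_mul fun a ha b hb => by
      have := hWLip a β b β ha hβ hb hβ
      rw [sub_self, abs_zero, add_zero] at this
      exact this.trans (mul_le_mul_of_nonneg_right (Real.le_coe_toNNReal L) (abs_nonneg _))
  exact lipschitz.continuousOn α hα

lemma GraphonLipschitz.ae_continuousWithinAt {W : ℝ → ℝ → ℝ} {L : ℝ}
    (hWLip : GraphonLipschitz W L) :
    ∀ᵐ α ∂volume.restrict (Set.Ioc 0 1), ∀ᵐ β ∂volume.restrict (Set.Ioc 0 1),
      ContinuousWithinAt (fun a => W a β) (Set.Icc 0 1) α := by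
  filter_upwards [ae_restrict_mem measurableSet_Ioc] with α hα
  filter_upwards [ae_restrict_mem measurableSet_Ioc] with β hβ
  exact hWLip.continuousWithinAt (Set.Ioc_subset_Icc_self hα) (Set.Ioc_subset_Icc_self hβ)

lemma EnsembleLipschitzUpTo.ae_continuousWithinAt [Fintype 𝒳] [Fintype 𝒰]
    {πe : ℝ → ℕ → 𝒳 → 𝒰 → ℝ} (hπe : EnsembleLipschitzUpTo πe) :
    ∀ᵐ α ∂volume.restrict (Set.Ioc (0 : ℝ) 1), ContinuousWithinAt πe (Set.Icc 0 1) α := by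
  obtain ⟨L, D, hD⟩ := hπe
  filter_upwards [ae_restrict_mem measurableSet_Ioc,
    ae_restrict_of_ae (D.countable_toSet.ae_notMem volume)] with α hα hαD
  have hα := Set.Ioc_subset_Icc_self hα
  obtain ⟨r, hr, ball_subset⟩ :=
    Metric.isOpen_iff.1 D.finite_toSet.isClosed.isOpen_compl α hαD
  simp only [continuousWithinAt_pi]
  intro t x u
  have lipschitz_near : ∀ᶠ a in nhdsWithin α (Set.Icc 0 1),
      dist (πe a t x u) (πe α t x u) ≤ L * |a - α| := by
    filter_upwards [self_mem_nhdsWithin, mem_nhdsWithin_of_mem_nhds (Metric.ball_mem_nhds α hr)]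
      with a ha a_near
    refine hD t x u a ha α hα fun d hd hd_between => ball_subset ?_ hd
    exact (convex_ball α r).segment_subset a_near (Metric.mem_ball_self hr)
      (segment_eq_uIcc a α ▸ hd_between)
  have bound_continuous : Continuous fun a => L * |a - α| := by fun_prop
  have bound_tendsto := (bound_continuous.tendsto α).mono_left
    (nhdsWithin_le_nhds (s := Set.Icc 0 1))
  rw [sub_self, abs_zero, mul_zero] at bound_tendsto
  exact tendsto_iff_dist_tendsto_zero.2
    (squeeze_zero' (.of_forall fun _ => dist_nonneg) lipschitz_near bound_tendsto)

lemma IsEdgeWeights.mem_Icc {N : ℕ} {ξ : Fin N → Fin N → ℝ} (hξ : IsEdgeWeights ξ) (i j : Fin N) :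
    ξ i j ∈ Set.Icc (0 : ℝ) 1 := by
  rcases hξ.1 i j with h | h <;> rw [h]
  · exact ⟨le_rfl, zero_le_one⟩
  · exact ⟨zero_le_one, le_rfl⟩

end Regularity

theorem deviating_agent_state_neighborhood_convergence_general [Fintype 𝒳] [DecidableEq 𝒳]
    [Fintype 𝒰] {μ0 : 𝒳 → ℝ} (hμ0 : μ0 ∈ simplex 𝒳) {P : 𝒳 → 𝒰 → (𝒳 → ℝ) → 𝒳 → ℝ}
    (hP : IsKernel P) {LP : ℝ} (hPLip : KernelLipschitz P LP) {W : ℝ → ℝ → ℝ} (hW : IsDigraphon W)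
    (hWcont : ∀ᵐ α ∂volume.restrict (Set.Ioc 0 1), ∀ᵐ β ∂volume.restrict (Set.Ioc 0 1),
      ContinuousWithinAt (fun a => W a β) (Set.Icc 0 1) α)
    {ξ : (N : ℕ) → Fin N → Fin N → ℝ} (hξ : ∀ N i j, ξ N i j ∈ Set.Icc (0 : ℝ) 1)
    (hWN : OpConvergesTo (fun N => stepGraphon (ξ N)) W) {πe : ℝ → ℕ → 𝒳 → 𝒰 → ℝ}
    (hπe : ∀ α ∈ Set.Icc (0 : ℝ) 1, IsPolicy (πe α))
    (hπe_cont : ∀ᵐ α ∂volume.restrict (Set.Ioc (0 : ℝ) 1),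
      ContinuousWithinAt πe (Set.Icc 0 1) α)
    {μ : ℕ → ℝ → 𝒳 → ℝ} (hμ : IsMeanFieldOf W P μ0 πe μ) {ℋ : Set (𝒳 → (𝒳 → ℝ) → ℝ)}
    {M L : ℝ} (hℋbdd : ∀ h ∈ ℋ, ∀ x ν, ν ∈ subProb 𝒳 → |h x ν| ≤ M)
    (hℋLip : ∀ h ∈ ℋ, ∀ x ν ν', ν ∈ subProb 𝒳 → ν' ∈ subProb 𝒳 →
      |h x ν - h x ν'| ≤ L * l1dist ν ν') {ε p : ℝ} (hε : 0 < ε) (hp : 0 < p) (t : ℕ) :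
    ∃ N' : ℕ, ∀ N > N', ∃ Wset : Finset (Fin N), ⌊(1 - p) * (N : ℝ)⌋ ≤ (Wset.card : ℤ) ∧
      ∀ i ∈ Wset, ∀ πd : ℕ → 𝒳 → 𝒰 → ℝ, IsPolicy πd → ∀ h ∈ ℋ,
        |(jointLaw P μ0 (ξ N) (Function.update (gammaN πe N) i πd) t ⬝ᵥ
              fun X => h (X i) (empNbhd (ξ N) X i)) -
            stateLaw P μ0 (fun s => nbhd W (μ s) (rep N i)) πd t ⬝ᵥ
              fun x => h x (nbhd W (μ t) (rep N i))| < ε := by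
  have hν := hμ.mem_simplex hW hP hμ0 hπe
  have gap_tendsto (s : ℕ) := tendsto_average_nbhdGap hW hξ hWN hWcont (hμ.1 s) (hν s) <| by
    filter_upwards [ae_restrict_mem measurableSet_Ioc, hWcont, hπe_cont] with α hα hα_W hα_π
    exact hμ.continuousWithinAt hW hP hPLip hμ0 hπe (Set.Ioc_subset_Icc_self hα) hα_W hα_π s
  let C := max (max L (M * LP)) 0
  have hC : 0 ≤ C := le_max_right _ _
  obtain ⟨N', hN'⟩ := eventually_atTop.1 <| eventually_exists_sum_meanNbhdError_lt hP hPLip hμ0 hW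
    hξ hπe hμ gap_tendsto (Finset.range (t + 1)) hp (δ := ε / (C + 1)) (by positivity)
  refine ⟨N', fun N hN => ?_⟩
  obtain ⟨Wset, card_ge, error_lt⟩ := hN' N hN.le
  refine ⟨Wset, card_ge, fun i hi πd hπd h hh => ?_⟩
  have comparison := abs_jointLaw_nbhd_sub_stateLaw_le hP hPLip hμ0 (hξ N)
    (isPolicy_update_gammaN hπe i hπd) (fun s => nbhd_mem_subProb hW (hμ.1 s) (hν s) (rep N i)) i
    (hℋbdd h hh) (fun x ν hν ν' hν' => hℋLip h hh x ν ν' hν hν')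
    ((le_max_left _ _).trans (le_max_left _ 0)) ((le_max_right _ _).trans (le_max_left _ 0)) t
  rw [Function.update_self] at comparison
  calc _ ≤ C * _ := comparison
    _ ≤ C * (ε / (C + 1)) := mul_le_mul_of_nonneg_left (error_lt i hi πd hπd).le hC
    _ < ε := by
      rw [mul_div_assoc', div_lt_iff₀ (by positivity)]
      linarith

/-- joint convergence of the deviating agent's state and its empirical
neighborhood mean field. Under Assumptions (W) and (Lip), for any uniformly bounded,
uniformly Lipschitz family 𝓗 of functions h : 𝒳×ℬ₁(𝒳) → ℝ and any ε, p > 0, t ∈ 𝒯,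
there exists N' such that for all N > N':
sup_{h∈𝓗} |E[h(X^i_t,𝔾^i_t)] − E[h(X̂^{i/N}_t,𝔾^{i/N}_t)]| < ε, uniformly over all
deviations π̂ ∈ Π and all i in a set 𝒲_N of at least ⌊(1−p)N⌋ agents. -/
theorem deviating_agent_state_neighborhood_convergence
    {𝒳 𝒰 : Type*} [Fintype 𝒳] [DecidableEq 𝒳] [Nonempty 𝒳] [Fintype 𝒰] [Nonempty 𝒰]
    (T : ℕ) (μ0 : 𝒳 → ℝ) (hμ0 : μ0 ∈ simplex 𝒳)
    (P : 𝒳 → 𝒰 → (𝒳 → ℝ) → 𝒳 → ℝ) (hP : IsKernel P)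
    (r : 𝒳 → 𝒰 → (𝒳 → ℝ) → ℝ)
    (Lr LP LW : ℝ) (hrLip : RewardLipschitz r Lr) (hPLip : KernelLipschitz P LP)
    (W : ℝ → ℝ → ℝ) (hW : IsGraphon W) (hWLip : GraphonLipschitz W LW)
    (ξ : (N : ℕ) → Fin N → Fin N → ℝ) (hξ : ∀ N, IsEdgeWeights (ξ N))
    (hWconv : OpConvergesTo (fun N => stepGraphon (ξ N)) W)
    (πe : ℝ → ℕ → 𝒳 → 𝒰 → ℝ)
    (hπe : ∀ α ∈ Set.Icc (0:ℝ) 1, IsPolicy (πe α))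
    (hπemeas : ∀ t x u, Measurable fun α => πe α t x u)
    (hπeLip : EnsembleLipschitzUpTo πe)
    (μ : ℕ → ℝ → 𝒳 → ℝ) (hμ : IsMeanFieldOf W P μ0 πe μ)
    (ℋ : Set (𝒳 → (𝒳 → ℝ) → ℝ)) (Mh Lh : ℝ)
    (hℋbdd : ∀ h ∈ ℋ, ∀ x ν, ν ∈ subProb 𝒳 → |h x ν| ≤ Mh)
    (hℋLip : ∀ h ∈ ℋ, ∀ x ν ν', ν ∈ subProb 𝒳 → ν' ∈ subProb 𝒳 →
      |h x ν - h x ν'| ≤ Lh * l1dist ν ν')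
    (ε p : ℝ) (hε : 0 < ε) (hp : 0 < p) (t : ℕ) (ht : t < T) :
    ∃ N' : ℕ, ∀ N > N', ∃ Wset : Finset (Fin N),
      ⌊(1 - p) * (N : ℝ)⌋ ≤ (Wset.card : ℤ) ∧
      ∀ i ∈ Wset, ∀ πd : ℕ → 𝒳 → 𝒰 → ℝ, IsPolicy πd → ∀ h ∈ ℋ,
        |(∑ X : Fin N → 𝒳,
            jointLaw P μ0 (ξ N) (Function.update (gammaN πe N) i πd) t X *
              h (X i) (empNbhd (ξ N) X i)) -
          ∑ x, stateLaw P μ0 (fun s => nbhd W (μ s) ((((i : ℕ) : ℝ) + 1) / N)) πd t x *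
            h x (nbhd W (μ t) ((((i : ℕ) : ℝ) + 1) / N))| < ε := by
  exact deviating_agent_state_neighborhood_convergence_general hμ0 hP hPLip hW.isDigraphon
    hWLip.ae_continuousWithinAt (fun N => (hξ N).mem_Icc) hWconv hπe hπeLip.ae_continuousWithinAt hμ
    hℋbdd hℋLip hε hp t

end GMFG
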